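/- Let λ be a partition with largest part n = λ_1 and conjugate λ', let N ≥ 1, and let μ and μ̃ be compositions of |λ| into N nonnegative parts that are permutations of one another. Then ∑_{ν μ-admissible} t^{χ(ν)} ∏_{1≤i≤j≤n} Φ_{ν_{i+1,j}|ν_{i,j}}(q^{j-i} t^{λ'_i - λ'_j}; t) = ∑_{ν μ̃-admissible} t^{χ(ν)} ∏_{1≤i≤j≤n} Φ_{ν_{i+1,j}|ν_{i,j}}(q^{j-i} t^{λ'_i - λ'_j}; t), as elements of ℤ[q,t], where both sums are finite and Φ is evaluated by substituting z = q^{j-i} t^{λ'_i - λ'_j} into the polynomial Φ_{ν_{i+1,j}|ν_{i,j}}(z;t). -/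

import Mathlib

/-!
Both partition sums are expanded in the same way into matrix elements of a product of commuting
operators, one operator for each part of the composition, so that reordering the parts changes
nothing.

*Expansion of `Φ`.* When `ν` and `ν̃` have the same last entry `B`, summing over the `λ_j` one
variable at a time gives the power series identity (`PhiPoly_coe`)
`Φ_{ν|ν̃}(z) = (z;t)_{B+1} ∑_m z^m ∏_{k<N} C(m + ν̃_{k+1} - ν_k, m + ν̃_k - ν_k)_t`;
each summation is a `t`-Chu–Vandermonde convolution (`gaussInt_convolution`). In the partition sum
the sequences `ν_{i,j}` and `ν_{i+1,j}` have the same last entry for `i < j`, while for `i = j` the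
second one vanishes and `Φ` is the `m = 0` product. The prefactors depend only on `λ`, so it is
enough to fix nonnegative integers `m_{ij}` and to compare, for both compositions, the sums over
admissible families of `t^χ` times the products of Gaussian binomials.

*Chains.* Such a product is local in `k`: an admissible family is a chain of `N` states
`(ν_{i,j}^k)_{i,j}`, the `k`-th step adding `μ_k` particles, and its weight is a product of
one-step weights (`Adm.weight`). Extended to all integer states, the one-step weights are the
matrix elements of an operator `rowT` (`rowT_apply`). The extension is harmless because the weight
of a chain leaving the region where the Gaussian binomials are defined vanishes (`prod_ratW`).
Hence the sum is a matrix element of `T_{μ_N} ⋯ T_{μ_1}` (`sum_admissible`).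

*Commutation.* The operators `T_d` are the coefficients of the ordered product of the quantum
exponentials of the row operators `Y_i = ∑_j siteX i j` (`rowProd`); within a row the summands
`t`-commute, so each exponential factors over the sites (`qexp_add`), which yields the matrix
elements. Operators of non-neighbouring rows commute, and the shifts in neighbouring rows satisfy
the relations `RowRel`, which imply `Y_{i+1} Y_i - t Y_i Y_{i+1} = (1 - t) C_i` with `C_i` commuting
with `Y_i` and `Y_{i+1}`. Then the series `S(x) = qexp(Y_{i+1}) qexp(Y_i)` solves the functional
equation `S(x) = (1 + x(Y_i + Y_{i+1}) + x²C_i) S(tx)` (`qexp_mul_qexp`), so that its coefficients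
lie in the commutative algebra generated by `Y_i + Y_{i+1}` and `C_i` (`qexp_pair_commute`).
An induction on the number of rows extends this to all of them (`rowProd_commute`), so that `T_d T_e = T_e T_d` (`rowT_commute`).
-/

open Finset

noncomputable section

attribute [local instance] Classical.propDecidable

/-- The Gaussian binomial coefficient `C(a,b)_t` for natural arguments,
as a polynomial in `t` (it vanishes when `b > a`). -/
def gaussNat : ℕ → ℕ → Polynomial ℤ
  | _, 0 => 1
  | 0, _ + 1 => 0
  | a + 1, b + 1 => gaussNat a b + Polynomial.X ^ (b + 1) * gaussNat a (b + 1)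

/-- The Gaussian binomial coefficient `C(a,b)_t ∈ ℤ[t]`, set to `0` unless `a ≥ b ≥ 0`. -/
def gaussInt (a b : ℤ) : Polynomial ℤ :=
  if 0 ≤ b ∧ b ≤ a then gaussNat a.toNat b.toNat else 0

/-- The t-Pochhammer symbol `(w;t)_k = ∏_{i=0}^{k-1} (1 - w tⁱ)`. -/
def pochh {R : Type*} [CommRing R] (w t : R) (k : ℕ) : R :=
  ∏ i ∈ Finset.range k, (1 - w * t ^ i)

/-- `ν` with the convention `ν₀ = 0` (natural-number version). -/
def nuc (ν : ℕ → ℕ) (k : ℕ) : ℕ := if k = 0 then 0 else ν k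

/-- `σ_i = ν_i - ν_{i-1}`. -/
def sigv (ν : ℕ → ℕ) (i : ℕ) : ℕ := nuc ν i - nuc ν (i - 1)

/-- Accessor for the summation variables `λ_j`, `1 ≤ j ≤ N-1`. -/
def lamv (N : ℕ) (f : Fin (N - 1) → ℕ) (j : ℕ) : ℕ :=
  if h : j - 1 < N - 1 then f ⟨j - 1, h⟩ else 0

/-- Partial sums `λ_{1,j} = λ_1 + … + λ_j`. -/
def lamsum (N : ℕ) (f : Fin (N - 1) → ℕ) (j : ℕ) : ℕ :=
  ∑ a ∈ Finset.Icc 1 j, lamv N f a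

/-- The polynomial `Φ_{ν|nt}(z;t) ∈ ℤ[z,t]` (the finite-sum form), as an element of
`(ℤ[t])[z]` (outer variable `z`, inner variable `t`). -/
def PhiPoly (N : ℕ) (ν nt : ℕ → ℕ) : Polynomial (Polynomial ℤ) :=
  ∑ f ∈ Fintype.piFinset (fun j : Fin (N - 1) => Finset.range (sigv ν ((j : ℕ) + 1) + 1)),
    ∏ j ∈ Finset.Icc 1 (N - 1),
      (((Polynomial.X : Polynomial (Polynomial ℤ)) *
            Polynomial.C (Polynomial.X ^ (nuc ν (j - 1) - lamsum N f (j - 1)))) ^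
          (lamv N f j) *
        pochh (R := Polynomial (Polynomial ℤ)) (Polynomial.X *
            Polynomial.C (Polynomial.X ^ (nuc ν (j - 1) - lamsum N f (j - 1))))
          (Polynomial.C Polynomial.X) (sigv ν j - lamv N f j) *
        Polynomial.C (gaussInt (sigv ν j) (lamv N f j)) *
        Polynomial.C
          (gaussInt ((nt (j + 1) : ℤ) - (ν j : ℤ) + lamsum N f j)
            ((nt j : ℤ) - (ν j : ℤ) + lamsum N f j)))

/-- The conjugate partition: `λ'_j = #{i ∈ [1,M] : λ_i ≥ j}`. -/
def conjP (M : ℕ) (lam : ℕ → ℕ) (j : ℕ) : ℕ :=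
  ((Finset.Icc 1 M).filter fun i => j ≤ lam i).card

/-- Accessor for a family `ν = (ν_{i,j}^k)`. -/
def nuV (n N : ℕ) (f : Fin (n + 1) × Fin (n + 1) × Fin (N + 1) → ℕ) (i j k : ℕ) : ℕ :=
  if h : i < n + 1 ∧ j < n + 1 ∧ k < N + 1 then f (⟨i, h.1⟩, ⟨j, h.2.1⟩, ⟨k, h.2.2⟩) else 0

/-- `μ`-admissibility of a family `ν = (ν_{i,j}^k)_{1 ≤ i ≤ j ≤ n, 1 ≤ k ≤ N}`:
the family vanishes outside its index region, each `ν_{i,j}` is weakly increasing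
with top entry `λ'_j - λ'_{j+1}`, and `∑_{i≤j} ν_{i,j}^k = μ_1 + … + μ_k`. -/
def Adm (n N : ℕ) (lamC mu : ℕ → ℕ) (f : Fin (n + 1) × Fin (n + 1) × Fin (N + 1) → ℕ) : Prop :=
  (∀ p : Fin (n + 1) × Fin (n + 1) × Fin (N + 1),
      ¬(1 ≤ (p.1 : ℕ) ∧ (p.1 : ℕ) ≤ (p.2.1 : ℕ) ∧ 1 ≤ (p.2.2 : ℕ)) → f p = 0) ∧
  (∀ i j k, 1 ≤ i → i ≤ j → j ≤ n → 1 ≤ k → k < N →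
      nuV n N f i j k ≤ nuV n N f i j (k + 1)) ∧
  (∀ i j, 1 ≤ i → i ≤ j → j ≤ n → nuV n N f i j N = lamC j - lamC (j + 1)) ∧
  (∀ k, 1 ≤ k → k ≤ N →
      ∑ i ∈ Finset.Icc 1 n, ∑ j ∈ Finset.Icc i n, nuV n N f i j k =
        ∑ k' ∈ Finset.Icc 1 k, mu k')

/-- The set of `μ`-admissible families. -/
def admSet (M N : ℕ) (lam mu : ℕ → ℕ) :
    Finset (Fin (lam 1 + 1) × Fin (lam 1 + 1) × Fin (N + 1) → ℕ) :=
  (Fintype.piFinset fun _ => Finset.range (M + 1)).filter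
    (Adm (lam 1) N (conjP M lam) mu)

/-- The exponent `χ(ν)`. -/
def chiZ (n N : ℕ) (f : Fin (n + 1) × Fin (n + 1) × Fin (N + 1) → ℕ) : ℤ :=
  ∑ k ∈ Finset.Icc 1 N, ∑ i ∈ Finset.Icc 1 n, ∑ j ∈ Finset.Icc i n,
    ((((nuV n N f i j k : ℤ) - nuV n N f i j (k - 1)) *
        ((nuV n N f i j k : ℤ) - nuV n N f i j (k - 1) - 1)) / 2 +
      ∑ l ∈ Finset.Icc (j + 1) n,
        ((nuV n N f i j k : ℤ) - nuV n N f i j (k - 1)) *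
          ((nuV n N f i l k : ℤ) - nuV n N f (i + 1) l (k - 1)))

/-- Embedding `ℤ[t] →+* ℤ[q][t,t⁻¹]` sending `t` to the Laurent variable. -/
def tEmbA : Polynomial ℤ →+* LaurentPolynomial (Polynomial ℤ) :=
  Polynomial.eval₂RingHom (Int.castRingHom (LaurentPolynomial (Polynomial ℤ)))
    (LaurentPolynomial.T 1)

/-- The variable `q` in `ℤ[q][t,t⁻¹]`. -/
def qA : LaurentPolynomial (Polynomial ℤ) := LaurentPolynomial.C Polynomial.X

/-- The sum `∑_{ν μ-admissible} t^{χ(ν)} ∏_{1≤i≤j≤n} Φ_{ν_{i+1,j}|ν_{i,j}}(q^{j-i} t^{λ'_i-λ'_j}; t)`. -/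
def Zsum13 (M N : ℕ) (lam mu : ℕ → ℕ) : LaurentPolynomial (Polynomial ℤ) :=
  ∑ f ∈ admSet M N lam mu,
    LaurentPolynomial.T (chiZ (lam 1) N f) *
      ∏ i ∈ Finset.Icc 1 (lam 1), ∏ j ∈ Finset.Icc i (lam 1),
        Polynomial.eval₂ tEmbA
          (qA ^ (j - i) * LaurentPolynomial.T ((conjP M lam i : ℤ) - conjP M lam j))
          (PhiPoly N (fun k => nuV (lam 1) N f (i + 1) j k)
            (fun k => nuV (lam 1) N f i j k))

/-! ### Quantum exponentials over a noncommutative algebra -/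

section QExp

variable {K E : Type*} [Field K] [Ring E] [Algebra K E]

/-- The coefficient `t^{s(s-1)/2} / (t;t)_s` of the quantum exponential. -/
def ecoef (t : K) (s : ℕ) : K := ∏ i ∈ Finset.range s, t ^ i / (1 - t ^ (i + 1))

/-- The quantum exponential `∑_s t^{s(s-1)/2} / (t;t)_s · (xA)^s`, a power series in `x` with
coefficients in the noncommutative algebra `E`. -/
def qexp (t : K) (A : E) : PowerSeries E := PowerSeries.mk fun s => ecoef t s • A ^ s

/-- The dilation `f(x) ↦ f(tx)` of power series (Mathlib's `rescale` needs commuting coefficients). -/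
def dil (t : K) (f : PowerSeries E) : PowerSeries E :=
  PowerSeries.mk fun n => t ^ n • PowerSeries.coeff n f

lemma dil_mul (t : K) (f g : PowerSeries E) : dil t (f * g) = dil t f * dil t g := by
  ext n
  simp only [dil, PowerSeries.coeff_mk, PowerSeries.coeff_mul, Finset.smul_sum]
  refine Finset.sum_congr rfl fun p hp => ?_
  rw [Finset.HasAntidiagonal.mem_antidiagonal] at hp
  rw [← hp, smul_mul_smul_comm, pow_add]

lemma ecoef_succ (t : K) (ht : ∀ d : ℕ, 1 - t ^ (d + 1) ≠ 0) (s : ℕ) :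
    ecoef t (s + 1) * (1 - t ^ (s + 1)) = t ^ s * ecoef t s := by
  rw [ecoef, Finset.prod_range_succ, ← ecoef]
  have := ht s
  field_simp

lemma qexp_dil (t : K) (ht : ∀ d : ℕ, 1 - t ^ (d + 1) ≠ 0) (A : E) :
    qexp t A = dil t (qexp t A) + PowerSeries.X * (PowerSeries.C A * dil t (qexp t A)) := by
  ext n
  rcases n with _ | n
  · simp [dil]
  · simp only [map_add, PowerSeries.coeff_succ_X_mul, PowerSeries.coeff_C_mul, qexp, dil,
      PowerSeries.coeff_mk]
    rw [smul_smul, smul_smul, mul_smul_comm, ← pow_succ' A n, ← add_smul, ← ecoef_succ t ht n]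
    congr 1
    ring

/-- Commuting `A` past the quantum exponential of `B` when `BA - tAB = (1-t)C` with `C` commuting
with `B`. -/
lemma qexp_mul_C (t : K) (ht : ∀ d : ℕ, 1 - t ^ (d + 1) ≠ 0) (A B C : E)
    (h : B * A = t • (A * B) + (1 - t) • C) (hB : C * B = B * C) :
    qexp t B * PowerSeries.C A =
      (PowerSeries.C A + PowerSeries.X * PowerSeries.C C) * dil t (qexp t B) := by
  have key : ∀ i : ℕ, B ^ (i + 1) * A =
      t ^ (i + 1) • (A * B ^ (i + 1)) + (1 - t ^ (i + 1)) • (C * B ^ i) := by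
    intro i
    induction i with
    | zero => simp [h]
    | succ i ih =>
      rw [pow_succ' B (i + 1), mul_assoc, ih, mul_add, mul_smul_comm, mul_smul_comm,
        ← mul_assoc B A, h, ← mul_assoc B C, ← hB, mul_assoc C B, ← pow_succ', add_mul,
        smul_mul_assoc, smul_mul_assoc, smul_add, smul_smul, smul_smul, add_assoc, ← add_smul,
        mul_assoc A B, ← pow_succ']
      congr 2 <;> ring
  ext n
  rcases n with _ | n
  · simp [qexp, dil, ecoef, PowerSeries.coeff_mul_C, add_mul, mul_assoc]
  · simp only [add_mul, mul_assoc, map_add, PowerSeries.coeff_succ_X_mul, PowerSeries.coeff_C_mul,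
      qexp, dil, PowerSeries.coeff_mk, PowerSeries.coeff_mul_C]
    rw [smul_mul_assoc, key, smul_add, smul_smul, smul_smul, ecoef_succ t ht, mul_smul_comm,
      mul_smul_comm, mul_smul_comm, mul_smul_comm, smul_smul, mul_comm (t ^ _) (ecoef t (n+1))]
    simp only [smul_smul]

/-- The functional equation `S(x) = (1 + x(A+B) + x²C) S(tx)` for the product of two quantum
exponentials. -/
lemma qexp_mul_qexp (t : K) (ht : ∀ d : ℕ, 1 - t ^ (d + 1) ≠ 0) (A B C : E)
    (h : B * A = t • (A * B) + (1 - t) • C) (hB : C * B = B * C) :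
    qexp t B * qexp t A = dil t (qexp t B * qexp t A)
      + PowerSeries.X * (PowerSeries.C (A + B) * dil t (qexp t B * qexp t A))
      + PowerSeries.X * (PowerSeries.X * (PowerSeries.C C * dil t (qexp t B * qexp t A))) := by
  have h1 := qexp_mul_C t ht A B C h hB
  have hX : ∀ f : PowerSeries E, f * PowerSeries.X = PowerSeries.X * f :=
    fun f => PowerSeries.commute_X f
  rw [dil_mul]
  conv_lhs => rw [qexp_dil t ht A]
  rw [mul_add, ← mul_assoc (qexp t B) PowerSeries.X, hX, mul_assoc PowerSeries.X (qexp t B),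
    ← mul_assoc (qexp t B) (PowerSeries.C A), h1]
  conv_lhs => enter [1]; rw [qexp_dil t ht B]
  simp only [add_mul, mul_add, mul_assoc, map_add]
  abel

lemma qexp_coeff_zero (t : K) (A : E) : PowerSeries.constantCoeff (qexp t A) = 1 := by
  rw [← PowerSeries.coeff_zero_eq_constantCoeff_apply]
  simp [qexp, ecoef]

lemma qexp_isUnit (t : K) (A : E) : IsUnit (qexp t A) := by
  rw [PowerSeries.isUnit_iff_constantCoeff, qexp_coeff_zero]
  exact isUnit_one

/-- If `BA = tAB` the quantum exponential turns the sum `A + B` into a product. -/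
lemma qexp_add (t : K) (ht : ∀ d : ℕ, 1 - t ^ (d + 1) ≠ 0) (A B : E)
    (h : B * A = t • (A * B)) : qexp t B * qexp t A = qexp t (A + B) := by
  have h1 := qexp_mul_qexp t ht A B 0 (by simp [h]) (by simp)
  have h2 := qexp_dil t ht (A + B)
  ext n
  induction n with
  | zero => simp [PowerSeries.coeff_zero_eq_constantCoeff, qexp_coeff_zero]
  | succ n ih =>
    have e1 := congrArg (PowerSeries.coeff (n + 1)) h1
    have e2 := congrArg (PowerSeries.coeff (n + 1)) h2
    simp only [map_zero, zero_mul, mul_zero, add_zero] at e1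
    rw [map_add, PowerSeries.coeff_succ_X_mul, PowerSeries.coeff_C_mul] at e1 e2
    simp only [dil, PowerSeries.coeff_mk] at e1 e2
    rw [ih] at e1
    have e3 : (1 - t ^ (n + 1)) • (PowerSeries.coeff (n + 1) (qexp t B * qexp t A)) =
        (1 - t ^ (n + 1)) • (PowerSeries.coeff (n + 1) (qexp t (A + B))) := by
      rw [sub_smul, sub_smul, one_smul, one_smul]
      conv_lhs => enter [1]; rw [e1]
      conv_rhs => enter [1]; rw [e2]
      abel
    exact smul_right_injective E (ht n) e3

/-- If `C = (BA - tAB)/(1-t)` commutes with `A` and `B`, all coefficients of the product of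
quantum exponentials lie in the commutative algebra generated by `A + B` and `C`. -/
lemma qexp_pair_commute (t : K) (ht : ∀ d : ℕ, 1 - t ^ (d + 1) ≠ 0) (A B C : E)
    (h : B * A = t • (A * B) + (1 - t) • C) (hB : C * B = B * C) (hA : C * A = A * C) (d e : ℕ) :
    Commute (PowerSeries.coeff d (qexp t B * qexp t A))
      (PowerSeries.coeff e (qexp t B * qexp t A)) := by
  have h1 := qexp_mul_qexp t ht A B C h hB
  set S := qexp t B * qexp t A with hS
  have S0 : PowerSeries.coeff 0 S = 1 := by
    simp [hS, PowerSeries.coeff_zero_eq_constantCoeff, qexp_coeff_zero]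
  have gen : ∀ Z : E, Commute Z (A + B) → Commute Z C → ∀ d, Commute Z (PowerSeries.coeff d S) := by
    intro Z hZ1 hZ2 d
    induction d using Nat.strong_induction_on with
    | _ d ih =>
      rcases d with _ | d
      · rw [S0]; exact Commute.one_right Z
      · have e1 := congrArg (PowerSeries.coeff (d + 1)) h1
        have e3 : (1 - t ^ (d + 1)) • (PowerSeries.coeff (d + 1) S) =
            (A + B) * (t ^ d • PowerSeries.coeff d S) + PowerSeries.coeff d
              (PowerSeries.X * (PowerSeries.C C * dil t S)) := by
          rw [sub_smul, one_smul]
          conv_lhs => enter [1]; rw [e1]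
          rw [map_add (PowerSeries.coeff (d + 1)), map_add (PowerSeries.coeff (d + 1)),
            PowerSeries.coeff_succ_X_mul, PowerSeries.coeff_succ_X_mul, PowerSeries.coeff_C_mul]
          simp only [dil, PowerSeries.coeff_mk]
          abel
        have e4 : PowerSeries.coeff (d + 1) S = (1 - t ^ (d + 1))⁻¹ •
            ((A + B) * (t ^ d • PowerSeries.coeff d S) + PowerSeries.coeff d
              (PowerSeries.X * (PowerSeries.C C * dil t S))) := by
          rw [← e3, inv_smul_smul₀ (ht d)]
        rw [e4]
        refine Commute.smul_right (Commute.add_right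
          (hZ1.mul_right (Commute.smul_right (ih d (by omega)) _)) ?_) _
        rcases d with _ | d
        · simp
        · simp only [PowerSeries.coeff_succ_X_mul, PowerSeries.coeff_C_mul, dil,
            PowerSeries.coeff_mk]
          exact hZ2.mul_right (Commute.smul_right (ih d (by omega)) _)
  have c1 : Commute (A + B) C := by
    show (A + B) * C = C * (A + B)
    rw [add_mul, mul_add, hA, hB]
  refine gen _ (gen _ (Commute.refl _) c1 d).symm (gen _ c1.symm (Commute.refl _) d).symm e

/-- The embedding of `E⟦x⟧` in `E⟦x⟧⟦y⟧` as series in `x`. -/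
def inx : PowerSeries E →+* PowerSeries (PowerSeries E) := PowerSeries.C

/-- The embedding of `E⟦x⟧` in `E⟦x⟧⟦y⟧` which renames `x` to `y`. -/
def iny : PowerSeries E →+* PowerSeries (PowerSeries E) := PowerSeries.map PowerSeries.C

lemma commute_in_iff (P Q : PowerSeries E) :
    Commute (inx P) (iny Q) ↔
      ∀ d e, Commute (PowerSeries.coeff d P) (PowerSeries.coeff e Q) := by
  have e1 : ∀ d e, PowerSeries.coeff d (PowerSeries.coeff e (inx P * iny Q)) =
      PowerSeries.coeff d P * PowerSeries.coeff e Q := by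
    intro d e
    rw [inx, iny, PowerSeries.coeff_C_mul, PowerSeries.coeff_map, PowerSeries.coeff_mul_C]
  have e2 : ∀ d e, PowerSeries.coeff d (PowerSeries.coeff e (iny Q * inx P)) =
      PowerSeries.coeff e Q * PowerSeries.coeff d P := by
    intro d e
    rw [inx, iny, PowerSeries.coeff_mul_C, PowerSeries.coeff_map, PowerSeries.coeff_C_mul]
  constructor
  · intro h d e
    have := congrArg (fun z => PowerSeries.coeff d (PowerSeries.coeff e z)) h.eq
    simp only [e1, e2] at this
    exact this
  · intro h
    refine PowerSeries.ext fun e => PowerSeries.ext fun d => ?_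
    rw [e1, e2, (h d e).eq]

lemma qexp_commute (t : K) (A B : E) (h : Commute A B) :
    Commute (inx (qexp t A)) (iny (qexp t B)) := by
  rw [commute_in_iff]
  intro d e
  simp only [qexp, PowerSeries.coeff_mk]
  exact Commute.smul_left (Commute.smul_right (h.pow_pow _ _) _) _

/-- The ordered product `qexp (Y r) ⋯ qexp (Y 1)`. -/
def rowProd (t : K) (Y : ℕ → E) : ℕ → PowerSeries E
  | 0 => 1
  | r + 1 => qexp t (Y (r + 1)) * rowProd t Y r

/-- The coefficients of the ordered product of quantum exponentials commute. The new factor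
`qexp (Y (r+2))` in the variable `y` is moved past all but its neighbour `qexp (Y (r+1))`, and the
commutation relation for the two neighbouring factors exchanges `x` and `y`. -/
lemma rowProd_commute (t : K) (ht : ∀ d : ℕ, 1 - t ^ (d + 1) ≠ 0) (Y C : ℕ → E)
    (hfar : ∀ i j, i + 2 ≤ j → Commute (Y i) (Y j))
    (hC : ∀ i, Y (i + 1) * Y i = t • (Y i * Y (i + 1)) + (1 - t) • C i)
    (hC1 : ∀ i, C i * Y (i + 1) = Y (i + 1) * C i) (hC2 : ∀ i, C i * Y i = Y i * C i) (r : ℕ) :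
    Commute (inx (rowProd t Y r)) (iny (rowProd t Y r)) := by
  have far : ∀ r j, r + 2 ≤ j → Commute (inx (rowProd t Y r)) (iny (qexp t (Y j))) ∧
      Commute (inx (qexp t (Y j))) (iny (rowProd t Y r)) := by
    intro r
    induction r with
    | zero => intro j _; simp [rowProd]
    | succ r ih =>
      intro j hj
      obtain ⟨i1, i2⟩ := ih j (by omega)
      constructor
      · rw [rowProd, map_mul]
        exact Commute.mul_left (qexp_commute t _ _ (hfar _ _ (by omega))) i1
      · rw [rowProd, map_mul]
        exact Commute.mul_right (qexp_commute t _ _ (hfar _ _ (by omega)).symm) i2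
  induction r with
  | zero => simp [rowProd]
  | succ r ih =>
    rcases r with _ | r
    · simpa [rowProd] using qexp_commute t _ _ (Commute.refl (Y 1))
    · have hp : Commute (inx (qexp t (Y (r + 2)) * qexp t (Y (r + 1))))
          (iny (qexp t (Y (r + 2)) * qexp t (Y (r + 1)))) := by
        rw [commute_in_iff]
        exact qexp_pair_commute t ht _ _ (C (r + 1)) (hC _) (hC1 _) (hC2 _)
      obtain ⟨f1, f2⟩ := far r (r + 2) le_rfl
      have hs : Commute (inx (qexp t (Y (r + 1)))) (iny (qexp t (Y (r + 1)))) :=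
        qexp_commute t _ _ (Commute.refl _)
      obtain ⟨u, hu⟩ := (qexp_isUnit t (Y (r + 1))).map (inx (E := E))
      rw [rowProd, rowProd]
      rw [rowProd] at ih
      simp only [map_mul] at ih hp ⊢
      rw [← hu] at ih hp hs ⊢
      set a2 := inx (qexp t (Y (r + 2)))
      set b2 := iny (qexp t (Y (r + 2)))
      set b1 := iny (qexp t (Y (r + 1)))
      set Ta := inx (rowProd t Y r)
      set Tb := iny (rowProd t Y r)
      have hs' : (↑u⁻¹ : PowerSeries (PowerSeries E)) * b1 = b1 * ↑u⁻¹ :=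
        (hs.units_inv_left).eq
      have ih' := ih.eq
      have hp' := hp.eq
      show a2 * (u * Ta) * (b2 * (b1 * Tb)) = b2 * (b1 * Tb) * (a2 * (u * Ta))
      calc a2 * (u * Ta) * (b2 * (b1 * Tb))
          = a2 * u * (Ta * b2) * (b1 * Tb) := by simp only [mul_assoc]
        _ = a2 * u * b2 * (↑u⁻¹ * (u * Ta * (b1 * Tb))) := by
          rw [f1.eq]; simp only [mul_assoc, Units.inv_mul_cancel_left]
        _ = a2 * u * b2 * (↑u⁻¹ * b1) * Tb * (u * Ta) := by rw [ih']; simp only [mul_assoc]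
        _ = (a2 * u * (b2 * b1)) * ↑u⁻¹ * Tb * (u * Ta) := by rw [hs']; simp only [mul_assoc]
        _ = b2 * b1 * (a2 * Tb) * (u * Ta) := by
          rw [hp']; simp only [mul_assoc, Units.mul_inv_cancel_left]
        _ = b2 * (b1 * Tb) * (a2 * (u * Ta)) := by rw [f2.eq]; simp only [mul_assoc]

end QExp

/-! ### The twisted Serre relations -/

section Serre

variable {K E : Type*} [Field K] [Ring E] [Algebra K E]

lemma sum_antisymm {E : Type*} [AddCommGroup E] (J : Finset ℕ) (g : ℕ → ℕ → E) :
    ∑ l ∈ J, ∑ k ∈ J, (g l k - g k l) = 0 := by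
  simp only [Finset.sum_sub_distrib]
  rw [Finset.sum_comm, sub_self]

lemma sum_sum_mul_sum {E : Type*} [Ring E] (J : Finset ℕ) (g : ℕ → ℕ → E) (A : ℕ → E) :
    (∑ j ∈ J, ∑ l ∈ J, g j l) * ∑ k ∈ J, A k = ∑ j ∈ J, ∑ l ∈ J, ∑ k ∈ J, g j l * A k := by
  rw [Finset.sum_mul]
  refine Finset.sum_congr rfl fun j _ => ?_
  rw [Finset.sum_mul_sum]

lemma sum_mul_sum_sum {E : Type*} [Ring E] (J : Finset ℕ) (g : ℕ → ℕ → E) (A : ℕ → E) :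
    (∑ k ∈ J, A k) * (∑ j ∈ J, ∑ l ∈ J, g j l) = ∑ j ∈ J, ∑ l ∈ J, ∑ k ∈ J, A k * g j l := by
  rw [Finset.mul_sum]
  refine Finset.sum_congr rfl fun j _ => ?_
  rw [Finset.sum_mul_sum, Finset.sum_comm]

/-- The defining quadratic relations between two neighbouring rows: `A` and `B` are the one-colour
parts of the lower and of the upper row operator, and `D` is the defect of `t`-commutation. -/
structure RowRel (t : K) (J : Finset ℕ) (A B D : ℕ → E) : Prop where
  hAA : ∀ j ∈ J, ∀ l ∈ J, j < l → A j * A l = t • (A l * A j)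
  hBB : ∀ j ∈ J, ∀ l ∈ J, j < l → B j * B l = t • (B l * B j)
  hlt : ∀ j ∈ J, ∀ l ∈ J, j < l → B j * A l = A l * B j
  hgt : ∀ j ∈ J, ∀ l ∈ J, l < j → B j * A l = t • (A l * B j)
  heq : ∀ j ∈ J, B j * A j = t • (A j * B j) + (1 - t) • D j
  hDA : ∀ j ∈ J, ∀ k ∈ J, D j * A k = (if j < k then t else 1) • (A k * D j)
  hDB : ∀ j ∈ J, ∀ k ∈ J, B k * D j = (if k < j then t else 1) • (D j * B k)

/-- The normalised `t`-commutator of two neighbouring row operators. -/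
def rowC (J : Finset ℕ) (A B D : ℕ → E) : E :=
  ∑ j ∈ J, D j + ∑ j ∈ J, ∑ l ∈ J, if j < l then A l * B j else 0

/-- The row sums `t`-commute up to `rowC`. -/
lemma RowRel.comm {t : K} {J : Finset ℕ} {A B D : ℕ → E} (h : RowRel t J A B D) :
    (∑ j ∈ J, B j) * (∑ j ∈ J, A j) =
      t • ((∑ j ∈ J, A j) * (∑ j ∈ J, B j)) + (1 - t) • rowC J A B D := by
  have e : ∀ j ∈ J, ∀ l ∈ J, B j * A l = t • (A l * B j) +
      ((1 - t) • (if j = l then D j else 0) + (1 - t) • (if j < l then A l * B j else 0)) := by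
    intro j hj l hl
    rcases lt_trichotomy j l with hh | hh | hh
    · rw [h.hlt j hj l hl hh, if_pos hh, if_neg hh.ne, smul_zero, zero_add, ← add_smul]
      simp
    · subst hh; simp [h.heq j hj]
    · simp [h.hgt j hj l hl hh, hh.ne', hh.not_gt]
  rw [Finset.sum_mul_sum, Finset.sum_congr rfl fun j hj => Finset.sum_congr rfl (e j hj)]
  simp only [Finset.sum_add_distrib, rowC, smul_add, Finset.smul_sum, Finset.sum_mul_sum]
  congr 1
  · rw [Finset.sum_comm]
  · congr 1
    refine Finset.sum_congr rfl fun j hj => ?_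
    simp [hj]

lemma RowRel.commA {t : K} {J : Finset ℕ} {A B D : ℕ → E} (h : RowRel t J A B D) :
    rowC J A B D * (∑ j ∈ J, A j) = (∑ j ∈ J, A j) * rowC J A B D := by
  rw [← sub_eq_zero]
  have e1 : ∀ j ∈ J, ∀ k ∈ J, D j * A k - A k * D j =
      if j < k then (t - 1) • (A k * D j) else 0 := by
    intro j hj k hk
    rw [h.hDA j hj k hk]
    split_ifs
    · rw [sub_smul, one_smul]
    · simp
  have e2 : ∀ j ∈ J, ∀ l ∈ J, ∀ k ∈ J,
      (if j < l then A l * B j else 0) * A k - A k * (if j < l then A l * B j else 0) =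
      (if j = k then (if j < l then (1 - t) • (A l * D j) else 0) else 0) +
      ((if j < l ∧ j < k then A l * A k * B j else 0) -
        (if j < k ∧ j < l then A k * A l * B j else 0)) := by
    intro j hj l hl k hk
    by_cases hjl : j < l
    · rcases lt_trichotomy j k with hh | hh | hh
      · simp only [hjl, hh, hh.ne, if_true, if_false, and_self, zero_add, mul_assoc]
        rw [h.hlt j hj k hk hh]
      · subst hh
        simp only [hjl, if_true, lt_irrefl, and_false, false_and, if_false, sub_zero, add_zero]
        rw [mul_assoc, h.heq j hj, ← mul_assoc (A j), h.hAA j hj l hl hjl, mul_add, mul_smul_comm,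
          mul_smul_comm, smul_mul_assoc, mul_assoc]
        abel
      · simp only [hjl, if_true, hh.ne', hh.not_gt, and_false, false_and, if_false, sub_zero,
          add_zero]
        rw [mul_assoc, h.hgt j hj k hk hh, ← mul_assoc (A k), h.hAA k hk l hl (hh.trans hjl),
          mul_smul_comm, smul_mul_assoc, mul_assoc, sub_self]
    · simp [hjl]
  have e3 : rowC J A B D * (∑ j ∈ J, A j) - (∑ j ∈ J, A j) * rowC J A B D =
      ∑ j ∈ J, ∑ k ∈ J, (D j * A k - A k * D j) + ∑ j ∈ J, ∑ l ∈ J, ∑ k ∈ J,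
      ((if j < l then A l * B j else 0) * A k - A k * (if j < l then A l * B j else 0)) := by
    have h1 := Finset.sum_mul_sum J J D A
    have h2 : (∑ j ∈ J, A j) * ∑ j ∈ J, D j = ∑ j ∈ J, ∑ k ∈ J, A k * D j := by
      rw [Finset.sum_mul_sum, Finset.sum_comm]
    have h3 := sum_sum_mul_sum J (fun j l => if j < l then A l * B j else 0) A
    have h4 := sum_mul_sum_sum J (fun j l => if j < l then A l * B j else 0) A
    simp only [Finset.sum_sub_distrib]
    rw [rowC, add_mul, mul_add, h1, h2, h3, h4]
    abel
  rw [e3, Finset.sum_congr rfl fun j hj => Finset.sum_congr rfl (e1 j hj),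
    Finset.sum_congr rfl fun j hj => Finset.sum_congr rfl fun l hl =>
      Finset.sum_congr rfl (e2 j hj l hl)]
  simp only [Finset.sum_add_distrib]
  have e4 : ∀ j ∈ J, ∑ l ∈ J, ∑ k ∈ J, ((if j < l ∧ j < k then A l * A k * B j else 0) -
        (if j < k ∧ j < l then A k * A l * B j else 0)) = 0 := fun j _ =>
    sum_antisymm J fun l k => if j < l ∧ j < k then A l * A k * B j else 0
  rw [Finset.sum_congr rfl e4, Finset.sum_const_zero, add_zero, ← Finset.sum_add_distrib]
  refine Finset.sum_eq_zero fun j hj => ?_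
  rw [← Finset.sum_add_distrib]
  refine Finset.sum_eq_zero fun l hl => ?_
  rw [Finset.sum_ite_eq, if_pos hj]
  split_ifs
  · rw [← add_smul]; simp
  · simp

lemma RowRel.commB {t : K} {J : Finset ℕ} {A B D : ℕ → E} (h : RowRel t J A B D) :
    rowC J A B D * (∑ j ∈ J, B j) = (∑ j ∈ J, B j) * rowC J A B D := by
  symm
  rw [← sub_eq_zero]
  have e1 : ∀ j ∈ J, ∀ k ∈ J, B k * D j - D j * B k =
      if k < j then (t - 1) • (D j * B k) else 0 := by
    intro j hj k hk
    rw [h.hDB j hj k hk]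
    split_ifs
    · rw [sub_smul, one_smul]
    · simp
  have e2 : ∀ l ∈ J, ∀ j ∈ J, ∀ k ∈ J,
      B k * (if j < l then A l * B j else 0) - (if j < l then A l * B j else 0) * B k =
      (if l = k then (if j < l then (1 - t) • (D l * B j) else 0) else 0) +
      ((if k < l ∧ j < l then A l * (B k * B j) else 0) -
        (if j < l ∧ k < l then A l * (B j * B k) else 0)) := by
    intro l hl j hj k hk
    by_cases hjl : j < l
    · rcases lt_trichotomy k l with hh | hh | hh
      · simp only [hjl, hh, hh.ne', if_true, if_false, and_self, zero_add, mul_assoc]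
        rw [← mul_assoc, h.hlt k hk l hl hh, mul_assoc]
      · subst hh
        simp only [hjl, if_true, lt_irrefl, and_false, false_and, if_false, sub_zero, add_zero]
        rw [← mul_assoc, h.heq k hk, add_mul, smul_mul_assoc, smul_mul_assoc, mul_assoc, mul_assoc,
          h.hBB j hj k hk hjl, mul_smul_comm]
        abel
      · simp only [hjl, if_true, hh.ne, hh.not_gt, and_false, false_and, if_false, sub_zero,
          add_zero]
        rw [← mul_assoc, h.hgt k hk l hl hh, smul_mul_assoc, mul_assoc, mul_assoc,
          h.hBB j hj k hk (hjl.trans hh), mul_smul_comm, sub_self]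
    · simp [hjl]
  have e3 : (∑ j ∈ J, B j) * rowC J A B D - rowC J A B D * (∑ j ∈ J, B j) =
      ∑ j ∈ J, ∑ k ∈ J, (B k * D j - D j * B k) + ∑ l ∈ J, ∑ j ∈ J, ∑ k ∈ J,
      (B k * (if j < l then A l * B j else 0) - (if j < l then A l * B j else 0) * B k) := by
    have h1 := Finset.sum_mul_sum J J D B
    have h2 : (∑ j ∈ J, B j) * ∑ j ∈ J, D j = ∑ j ∈ J, ∑ k ∈ J, B k * D j := by
      rw [Finset.sum_mul_sum, Finset.sum_comm]
    have h3 := sum_sum_mul_sum J (fun l j => if j < l then A l * B j else 0) B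
    have h4 := sum_mul_sum_sum J (fun l j => if j < l then A l * B j else 0) B
    simp only [Finset.sum_sub_distrib]
    rw [rowC, Finset.sum_comm (f := fun j l => if j < l then A l * B j else 0), add_mul, mul_add,
      h1, h2, h3, h4]
    abel
  rw [e3, Finset.sum_congr rfl fun j hj => Finset.sum_congr rfl (e1 j hj),
    Finset.sum_congr rfl fun l hl => Finset.sum_congr rfl fun j hj =>
      Finset.sum_congr rfl (e2 l hl j hj)]
  simp only [Finset.sum_add_distrib]
  have e4 : ∀ l ∈ J, ∑ j ∈ J, ∑ k ∈ J, ((if k < l ∧ j < l then A l * (B k * B j) else 0) -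
        (if j < l ∧ k < l then A l * (B j * B k) else 0)) = 0 := fun l _ =>
    sum_antisymm J fun j k => if k < l ∧ j < l then A l * (B k * B j) else 0
  rw [Finset.sum_congr rfl e4, Finset.sum_const_zero, add_zero, ← Finset.sum_add_distrib]
  refine Finset.sum_eq_zero fun j hj => ?_
  rw [← Finset.sum_add_distrib]
  refine Finset.sum_eq_zero fun l hl => ?_
  rw [Finset.sum_ite_eq, if_pos hj]
  split_ifs
  · rw [← add_smul]; simp
  · simp

end Serre

/-! ### The row operators -/

section Operators

variable {K : Type*} [Field K]

/-- The weighted shift `f ↦ (ν ↦ c(ν) f(ν - e))` on functions of the state `ν`. -/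
def wshift {V : Type*} [AddCommGroup V] (c : V → K) (e : V) : Module.End K (V → K) where
  toFun f ν := c ν * f (ν - e)
  map_add' f g := by ext ν; simp [mul_add]
  map_smul' a f := by ext ν; simp [mul_left_comm]

section Shift

variable {V : Type*} [AddCommGroup V]

lemma wshift_apply (c : V → K) (e : V) (f : V → K) (ν : V) :
    wshift c e f ν = c ν * f (ν - e) := rfl

lemma wshift_mul (c c' : V → K) (e e' : V) :
    wshift c e * wshift c' e' = wshift (fun ν => c ν * c' (ν - e)) (e + e') := by
  refine LinearMap.ext fun f => funext fun ν => ?_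
  simp [wshift_apply, mul_assoc, sub_sub]

lemma wshift_smul (a : K) (c : V → K) (e : V) :
    a • wshift c e = wshift (fun ν => a * c ν) e := by
  refine LinearMap.ext fun f => funext fun ν => ?_
  simp [wshift_apply, mul_assoc]

lemma wshift_add (c c' : V → K) (e : V) :
    wshift c e + wshift c' e = wshift (fun ν => c ν + c' ν) e := by
  refine LinearMap.ext fun f => funext fun ν => ?_
  simp [wshift_apply, add_mul]

lemma wshift_congr {c c' : V → K} {e e' : V} (hc : ∀ ν, c ν = c' ν) (he : e = e') :
    wshift c e = wshift c' e' := by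
  subst he
  rw [funext hc]

end Shift

/-- Particle numbers at the sites `(i, j)` (row `i`, colour `j`). Integer values are allowed, so that
the relations between the operators need no boundary conditions. -/
abbrev State := ℕ × ℕ → ℤ

/-- One particle at the site `(i, j)`. -/
def unitAt (i j : ℕ) : State := Pi.single (i, j) 1

/-- The number `m_{ij} + ν_{ij} - ν_{i+1,j}`. -/
def gap (m : ℕ → ℕ → ℤ) (i j : ℕ) (ν : State) : ℤ := m i j + ν (i, j) - ν (i + 1, j)

/-- The exponent `∑_{j < l ≤ n} (ν_{il} - ν_{i+1,l})`. -/
def tail (n i j : ℕ) (ν : State) : ℤ := ∑ l ∈ Finset.Ioc j n, (ν (i, l) - ν (i + 1, l))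

lemma gap_sub (m : ℕ → ℕ → ℤ) (i j i' l : ℕ) (ν : State) :
    gap m i j (ν - unitAt i' l) = gap m i j ν - (if i' = i ∧ l = j then 1 else 0) +
      (if i' = i + 1 ∧ l = j then 1 else 0) := by
  simp only [gap, unitAt, Pi.sub_apply, Pi.single_apply, Prod.mk.injEq, eq_comm (a := i'),
    eq_comm (a := l)]
  ring

lemma tail_sub (n i j i' l : ℕ) (ν : State) :
    tail n i j (ν - unitAt i' l) = tail n i j ν - (if i' = i ∧ j < l ∧ l ≤ n then 1 else 0) +
      (if i' = i + 1 ∧ j < l ∧ l ≤ n then 1 else 0) := by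
  have e : ∀ r : ℕ, ∑ x ∈ Finset.Ioc j n, (unitAt i' l (r, x)) =
      if i' = r ∧ j < l ∧ l ≤ n then 1 else 0 := by
    intro r
    simp only [unitAt, Pi.single_apply, Prod.mk.injEq]
    by_cases h : i' = r
    · subst h
      simp
    · simp [h, Ne.symm h]
  simp only [tail, Pi.sub_apply]
  rw [← e, ← e, ← Finset.sum_sub_distrib, ← Finset.sum_add_distrib]
  exact Finset.sum_congr rfl fun _ _ => by ring

/-- The coefficient of the operator which adds one particle at the site `(i, j)`. -/
def siteC (t : K) (m : ℕ → ℕ → ℤ) (n i j : ℕ) (ν : State) : K :=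
  (1 - t ^ gap m i j ν) * t ^ tail n i j ν

/-- The operator which adds one particle at the site `(i, j)`. -/
def siteX (t : K) (m : ℕ → ℕ → ℤ) (n i j : ℕ) : Module.End K (State → K) :=
  wshift (siteC t m n i j) (unitAt i j)

/-- The defect of `t`-commutation of `siteX` at the sites `(i, j)` and `(i + 1, j)`. -/
def siteD (t : K) (m : ℕ → ℕ → ℤ) (n i j : ℕ) : Module.End K (State → K) :=
  wshift (fun ν => siteC t m n (i + 1) j ν * t ^ tail n i j ν) (unitAt i j + unitAt (i + 1) j)

lemma site_rowRel (t : K) (t0 : t ≠ 0) (m : ℕ → ℕ → ℤ) (n i : ℕ) :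
    RowRel t (Finset.Icc 1 n) (siteX t m n i) (siteX t m n (i + 1)) (siteD t m n i) where
  hAA j hj l hl h := by
    have := (Finset.mem_Icc.1 hl).2
    simp only [siteX, wshift_mul, wshift_smul]
    refine wshift_congr (fun ν => ?_) (add_comm _ _)
    simp only [siteC, gap_sub, tail_sub]
    simp [(show i ≠ i + 1 + 1 by omega), h, h.ne, h.ne', h.not_gt, this, zpow_sub₀ t0]
    field_simp
  hBB j hj l hl h := by
    have := (Finset.mem_Icc.1 hl).2
    simp only [siteX, wshift_mul, wshift_smul]
    refine wshift_congr (fun ν => ?_) (add_comm _ _)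
    simp only [siteC, gap_sub, tail_sub]
    simp [(show i ≠ i + 1 + 1 by omega), h, h.ne, h.ne', h.not_gt, this, zpow_sub₀ t0]
    field_simp
  hlt j hj l hl h := by
    have := (Finset.mem_Icc.1 hl).2
    simp only [siteX, wshift_mul, wshift_smul]
    refine wshift_congr (fun ν => ?_) (add_comm _ _)
    simp only [siteC, gap_sub, tail_sub]
    simp [(show i ≠ i + 1 + 1 by omega), h, h.ne, h.ne', h.not_gt, this, zpow_sub₀ t0]
    ring
  hgt j hj l hl h := by
    have := (Finset.mem_Icc.1 hj).2
    simp only [siteX, wshift_mul, wshift_smul]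
    refine wshift_congr (fun ν => ?_) (add_comm _ _)
    simp only [siteC, gap_sub, tail_sub]
    simp [(show i ≠ i + 1 + 1 by omega), h, h.ne, h.ne', h.not_gt, this, zpow_add₀ t0]
    ring
  heq j hj := by
    simp only [siteX, siteD, wshift_mul, wshift_smul]
    rw [add_comm (unitAt (i + 1) j), wshift_add]
    refine wshift_congr (fun ν => ?_) rfl
    simp only [siteC, gap_sub, tail_sub]
    simp [(show i ≠ i + 1 + 1 by omega), zpow_add₀ t0]
    ring
  hDA j hj k hk := by
    have h1 := (Finset.mem_Icc.1 hk).2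
    have h2 := (Finset.mem_Icc.1 hj).2
    simp only [siteX, siteD, wshift_mul, wshift_smul]
    refine wshift_congr (fun ν => ?_) (add_comm _ _)
    simp only [siteC, ← sub_sub, gap_sub, tail_sub]
    rcases lt_trichotomy j k with h | h | h
    · simp [(show i ≠ i + 1 + 1 by omega), h, h.ne, h.ne', h.not_gt, h1, h2, zpow_sub₀ t0]
      field_simp
    · subst h
      simp [(show i ≠ i + 1 + 1 by omega)]
      ring
    · simp [(show i ≠ i + 1 + 1 by omega), h, h.ne, h.ne', h.not_gt, h1, h2]
      ring
  hDB j hj k hk := by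
    have h1 := (Finset.mem_Icc.1 hk).2
    have h2 := (Finset.mem_Icc.1 hj).2
    simp only [siteX, siteD, wshift_mul, wshift_smul]
    refine wshift_congr (fun ν => ?_) (add_comm _ _)
    simp only [siteC, ← sub_sub, gap_sub, tail_sub]
    rcases lt_trichotomy j k with h | h | h
    · simp [(show i ≠ i + 1 + 1 by omega), h, h.ne, h.ne', h.not_gt, h1, h2, zpow_sub₀ t0, zpow_add₀ t0]
      field_simp
    · subst h
      simp [(show i ≠ i + 1 + 1 by omega)]
      ring
    · simp [(show i ≠ i + 1 + 1 by omega), h, h.ne, h.ne', h.not_gt, h1, h2, zpow_sub₀ t0]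
      field_simp

lemma siteX_far (t : K) (m : ℕ → ℕ → ℤ) (n : ℕ) {i i' : ℕ} (h : i + 2 ≤ i') (j l : ℕ) :
    Commute (siteX t m n i j) (siteX t m n i' l) := by
  show _ * _ = _ * _
  simp only [siteX, wshift_mul]
  refine wshift_congr (fun ν => ?_) (add_comm _ _)
  simp only [siteC, gap_sub, tail_sub]
  have h1 : i' ≠ i := by omega
  have h2 : i' ≠ i + 1 := by omega
  have h3 : i ≠ i' + 1 := by omega
  simp [h1, h1.symm, h2, h3]
  ring

/-- The row operator `∑_j siteX i j`. -/
def rowY (t : K) (m : ℕ → ℕ → ℤ) (n i : ℕ) : Module.End K (State → K) :=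
  ∑ j ∈ Finset.Icc 1 n, siteX t m n i j

/-- The operator `T_d` which adds `d` particles in all rows `1, …, n`. -/
def rowT (t : K) (m : ℕ → ℕ → ℤ) (n d : ℕ) : Module.End K (State → K) :=
  PowerSeries.coeff d (rowProd t (rowY t m n) n)

lemma rowT_commute (t : K) (t0 : t ≠ 0) (ht : ∀ d : ℕ, 1 - t ^ (d + 1) ≠ 0) (m : ℕ → ℕ → ℤ)
    (n d e : ℕ) : Commute (rowT t m n d) (rowT t m n e) := by
  refine (commute_in_iff _ _).1 (rowProd_commute t ht (rowY t m n)
    (fun i => rowC (Finset.Icc 1 n) (siteX t m n i) (siteX t m n (i + 1)) (siteD t m n i))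
    ?_ (fun i => (site_rowRel t t0 m n i).comm) (fun i => (site_rowRel t t0 m n i).commB)
    (fun i => (site_rowRel t t0 m n i).commA) n) d e
  intro i j h
  exact Commute.sum_left _ _ _ fun a _ => Commute.sum_right _ _ _ fun b _ =>
    siteX_far t m n h a b

end Operators

/-! ### Matrix elements of the row operators -/

section Kernel

variable {K : Type*} [Field K]

/-- The matrix element of the quantum exponential of `siteX i j` which adds `s` particles; `x` and
`y` are the contents of the rows `i` and `i + 1`. -/
def siteW (t : K) (m : ℤ) (n j s : ℕ) (x y : ℕ → ℤ) : K :=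
  ∏ a ∈ Finset.range s,
    t ^ a / (1 - t ^ (a + 1)) *
      ((1 - t ^ (m + x j - y j - a)) * t ^ (∑ l ∈ Finset.Ioc j n, (x l - y l)))

lemma siteW_congr (t : K) (m : ℤ) {n j s s' : ℕ} {x x' y y' : ℕ → ℤ} (hs : s = s')
    (hj : j ≤ n) (hx : ∀ l, j ≤ l → l ≤ n → x l = x' l) (hy : ∀ l, j ≤ l → l ≤ n → y l = y' l) :
    siteW t m n j s x y = siteW t m n j s' x' y' := by
  subst hs
  rw [siteW, siteW, hx j le_rfl hj, hy j le_rfl hj]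
  have : ∑ l ∈ Finset.Ioc j n, (x l - y l) = ∑ l ∈ Finset.Ioc j n, (x' l - y' l) :=
    Finset.sum_congr rfl fun l hl => by
      rw [Finset.mem_Ioc] at hl
      rw [hx l hl.1.le hl.2, hy l hl.1.le hl.2]
  rw [this]

lemma wshift_pow {V : Type*} [AddCommGroup V] (c : V → K) (e : V) (s : ℕ) (f : V → K) (ν : V) :
    (wshift c e ^ s) f ν = (∏ a ∈ Finset.range s, c (ν - a • e)) * f (ν - s • e) := by
  induction s generalizing f with
  | zero => simp
  | succ s ih =>
    rw [pow_succ, Module.End.mul_apply, ih, wshift_apply, Finset.prod_range_succ, succ_nsmul,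
      sub_sub, mul_assoc]

lemma coeff_qexp_siteX (t : K) (m : ℕ → ℕ → ℤ) (n i j d : ℕ) (f : State → K) (ν : State) :
    PowerSeries.coeff d (qexp t (siteX t m n i j)) f ν =
      siteW t (m i j) n j d (fun l => ν (i, l)) (fun l => ν (i + 1, l)) *
        f (ν - d • unitAt i j) := by
  rw [qexp, PowerSeries.coeff_mk, LinearMap.smul_apply, Pi.smul_apply, siteX, wshift_pow, ecoef,
    smul_eq_mul, ← mul_assoc, siteW, ← Finset.prod_mul_distrib]
  congr 1
  refine Finset.prod_congr rfl fun a _ => ?_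
  rw [siteC]
  have e1 : gap m i j (ν - a • unitAt i j) = m i j + ν (i, j) - ν (i + 1, j) - a := by
    simp [gap, unitAt]
    ring
  have e2 : tail n i j (ν - a • unitAt i j) = ∑ l ∈ Finset.Ioc j n, (ν (i, l) - ν (i + 1, l)) := by
    rw [tail]
    refine Finset.sum_congr rfl fun l hl => ?_
    rw [Finset.mem_Ioc] at hl
    simp [unitAt, Pi.single_apply, hl.1.ne']
  rw [e1, e2]

/-- A natural-number valued displacement, as a vector. -/
def emb (s : ℕ × ℕ → ℕ) : State := fun p => s p

/-- The coefficients of `Q` move particles onto the sites of `T`, with matrix elements `W`. -/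
def HasKer (Q : PowerSeries (Module.End K (State → K))) (T : Finset (ℕ × ℕ))
    (W : State → State → K) : Prop :=
  ∀ d f ν, PowerSeries.coeff d Q f ν =
    ∑ s ∈ Finset.piAntidiag T d, W ν (ν - emb s) * f (ν - emb s)

lemma HasKer.cons {Q : PowerSeries (Module.End K (State → K))} {T : Finset (ℕ × ℕ)}
    {W' W : State → State → K} (h : HasKer Q T W') (t : K) (m : ℕ → ℕ → ℤ) (n i j : ℕ)
    (hp : (i, j) ∉ T)
    (hW : ∀ ν s, (∀ p, s p ≠ 0 → p ∈ Finset.cons (i, j) T hp) → W ν (ν - emb s) =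
      siteW t (m i j) n j (s (i, j)) (fun l => ν (i, l)) (fun l => ν (i + 1, l)) *
        W' (ν - s (i, j) • unitAt i j) (ν - emb s)) :
    HasKer (qexp t (siteX t m n i j) * Q) (Finset.cons (i, j) T hp) W := by
  intro d f ν
  rw [PowerSeries.coeff_mul, LinearMap.sum_apply, Finset.sum_apply, Finset.piAntidiag_cons,
    Finset.sum_disjiUnion]
  refine Finset.sum_congr rfl fun q _ => ?_
  rw [Module.End.mul_apply, coeff_qexp_siteX, h, Finset.mul_sum, Finset.sum_map]
  refine Finset.sum_congr rfl fun s hs => ?_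
  rw [Finset.mem_piAntidiag] at hs
  set s' : ℕ × ℕ → ℕ := addRightEmbedding (fun p => if p = (i, j) then q.1 else 0) s with hs'
  have e0 : s (i, j) = 0 := by
    by_contra h0
    exact hp (hs.2 _ h0)
  have e1 : s' (i, j) = q.1 := by simp [hs', e0]
  have e2 : ν - emb s' = ν - q.1 • unitAt i j - emb s := by
    funext p
    simp only [hs', emb, unitAt, Pi.sub_apply, Pi.smul_apply, Pi.single_apply,
      addRightEmbedding_apply, Pi.add_apply]
    split_ifs
    · push_cast
      simp
      ring
    · simp
  rw [hW ν s', e1, e2, mul_assoc]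
  intro p hp0
  rw [Finset.mem_cons]
  by_cases hpp : p = (i, j)
  · exact Or.inl hpp
  · right
    apply hs.2
    simpa [hs', hpp] using hp0

/-- The matrix element of the product of the first `r` row operators. -/
def rowsW (t : K) (m : ℕ → ℕ → ℤ) (n r : ℕ) (ν ν' : State) : K :=
  ∏ i ∈ Finset.Icc 1 r, ∏ j ∈ Finset.Icc 1 n,
    siteW t (m i j) n j (ν (i, j) - ν' (i, j)).toNat (fun l => ν (i, l)) (fun l => ν' (i + 1, l))

lemma rowsW_congr (t : K) (m : ℕ → ℕ → ℤ) (n r : ℕ) {ν₁ ν₂ : State} (ν' : State)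
    (h : ∀ i j, i ≤ r → ν₁ (i, j) = ν₂ (i, j)) : rowsW t m n r ν₁ ν' = rowsW t m n r ν₂ ν' := by
  refine Finset.prod_congr rfl fun i hi => Finset.prod_congr rfl fun j hj => ?_
  have hi := (Finset.mem_Icc.1 hi).2
  rw [h i j hi]
  simp only [h i _ hi]

lemma hasKer_row_aux (t : K) (t0 : t ≠ 0) (ht : ∀ d : ℕ, 1 - t ^ (d + 1) ≠ 0) (m : ℕ → ℕ → ℤ)
    (n r : ℕ) (Q : PowerSeries (Module.End K (State → K)))
    (h : HasKer Q (Finset.Icc 1 r ×ˢ Finset.Icc 1 n) (rowsW t m n r)) (b : ℕ) (hb : b ≤ n) :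
    HasKer (qexp t (∑ j ∈ Finset.Ioc (n - b) n, siteX t m n (r + 1) j) * Q)
      ({r + 1} ×ˢ Finset.Ioc (n - b) n ∪ Finset.Icc 1 r ×ˢ Finset.Icc 1 n)
      (fun ν ν' => (∏ j ∈ Finset.Ioc (n - b) n, siteW t (m (r + 1) j) n j
        (ν (r + 1, j) - ν' (r + 1, j)).toNat (fun l => ν (r + 1, l)) (fun l => ν' (r + 2, l))) *
        rowsW t m n r ν ν') := by
  induction b with
  | zero =>
    have : qexp t (0 : Module.End K (State → K)) = 1 := by
      ext d : 1
      rcases d with _ | d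
      · simp [qexp, ecoef]
      · simp [qexp, PowerSeries.coeff_one]
    simpa [this] using h
  | succ b ih =>
    obtain ⟨c, hc⟩ : ∃ c, n - b = c + 1 := ⟨n - b - 1, by omega⟩
    have hc' : n - (b + 1) = c := by omega
    have hcn : c + 1 ≤ n := by omega
    rw [hc']
    rw [hc] at ih
    have hJ : Finset.Ioc c n = Finset.cons (c + 1) (Finset.Ioc (c + 1) n) (by simp) := by
      ext l
      simp only [Finset.mem_Ioc, Finset.mem_cons]
      omega
    have hp : (r + 1, c + 1) ∉ {r + 1} ×ˢ Finset.Ioc (c + 1) n ∪ Finset.Icc 1 r ×ˢ Finset.Icc 1 n :=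
      by simp
    have hT : {r + 1} ×ˢ Finset.Ioc c n ∪ Finset.Icc 1 r ×ˢ Finset.Icc 1 n =
        Finset.cons (r + 1, c + 1)
          ({r + 1} ×ˢ Finset.Ioc (c + 1) n ∪ Finset.Icc 1 r ×ˢ Finset.Icc 1 n) hp := by
      ext ⟨a, l⟩
      simp only [Finset.mem_union, Finset.mem_product, Finset.mem_cons, Finset.mem_singleton,
        Finset.mem_Ioc, Finset.mem_Icc, Prod.mk.injEq]
      omega
    have hq : qexp t (∑ j ∈ Finset.Ioc c n, siteX t m n (r + 1) j) =
        qexp t (siteX t m n (r + 1) (c + 1)) *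
          qexp t (∑ j ∈ Finset.Ioc (c + 1) n, siteX t m n (r + 1) j) := by
      rw [hJ, Finset.sum_cons, add_comm, qexp_add t ht]
      rw [Finset.mul_sum, Finset.sum_mul, Finset.smul_sum]
      refine Finset.sum_congr rfl fun l hl => ?_
      rw [Finset.mem_Ioc] at hl
      exact (site_rowRel t t0 m n (r + 1)).hAA _ (Finset.mem_Icc.2 ⟨by omega, by omega⟩) _
        (Finset.mem_Icc.2 ⟨by omega, by omega⟩) hl.1
    rw [hq, hT, mul_assoc]
    refine (ih (by omega)).cons t m n (r + 1) (c + 1) hp fun ν s hs => ?_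
    have hup : ∀ l, s (r + 2, l) = 0 := by
      intro l
      by_contra h0
      have := hs _ h0
      simp at this
    rw [hJ, Finset.prod_cons, mul_assoc]
    congr 1
    · refine siteW_congr t _ ?_ hcn (fun _ _ _ => rfl) (fun l _ _ => ?_)
      · simp [emb]
      · simp [emb, hup]
    · congr 1
      · refine Finset.prod_congr rfl fun l hl => ?_
        rw [Finset.mem_Ioc] at hl
        refine siteW_congr t _ ?_ hl.2 (fun l' h1 h2 => ?_) (fun _ _ _ => rfl)
        · have : ¬ l = c + 1 := by omega
          simp [unitAt, Pi.single_apply, this]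
        · have : ¬ l' = c + 1 := by omega
          simp [unitAt, Pi.single_apply, this]
      · refine rowsW_congr t m n r _ fun i j hi => ?_
        have : ¬ i = r + 1 := by omega
        simp [unitAt, Pi.single_apply, this]

lemma hasKer_rows (t : K) (t0 : t ≠ 0) (ht : ∀ d : ℕ, 1 - t ^ (d + 1) ≠ 0) (m : ℕ → ℕ → ℤ)
    (n r : ℕ) :
    HasKer (rowProd t (rowY t m n) r) (Finset.Icc 1 r ×ˢ Finset.Icc 1 n) (rowsW t m n r) := by
  induction r with
  | zero =>
    intro d f ν
    rcases d with _ | d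
    · have : emb 0 = 0 := by funext p; simp [emb]
      simp [rowProd, rowsW, this]
    · simp [rowProd, PowerSeries.coeff_one]
  | succ r ih =>
    have h := hasKer_row_aux t t0 ht m n r _ ih n le_rfl
    have hJ : Finset.Ioc (n - n) n = Finset.Icc 1 n := by
      ext l
      simp only [Finset.mem_Ioc, Finset.mem_Icc]
      omega
    have hT : {r + 1} ×ˢ Finset.Icc 1 n ∪ Finset.Icc 1 r ×ˢ Finset.Icc 1 n =
        Finset.Icc 1 (r + 1) ×ˢ Finset.Icc 1 n := by
      ext ⟨a, l⟩
      simp only [Finset.mem_union, Finset.mem_product, Finset.mem_singleton, Finset.mem_Icc]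
      omega
    rw [hJ, hT] at h
    have hW : rowsW t m n (r + 1) = fun ν ν' => (∏ j ∈ Finset.Icc 1 n, siteW t (m (r + 1) j) n j
        (ν (r + 1, j) - ν' (r + 1, j)).toNat (fun l => ν (r + 1, l)) (fun l => ν' (r + 2, l))) *
        rowsW t m n r ν ν' := by
      funext ν ν'
      rw [rowsW, Finset.prod_Icc_succ_top (by omega), mul_comm]
      rfl
    rw [hW]
    exact h

lemma rowT_apply (t : K) (t0 : t ≠ 0) (ht : ∀ d : ℕ, 1 - t ^ (d + 1) ≠ 0) (m : ℕ → ℕ → ℤ)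
    (n d : ℕ) (f : State → K) (ν : State) :
    rowT t m n d f ν = ∑ s ∈ Finset.piAntidiag (Finset.Icc 1 n ×ˢ Finset.Icc 1 n) d,
      rowsW t m n n ν (ν - emb s) * f (ν - emb s) :=
  hasKer_rows t t0 ht m n n d f ν

end Kernel

/-! ### Gaussian binomial coefficients -/

section Gauss

/-- The product `(t;t)_a`. -/
def tfac (a : ℕ) : Polynomial ℤ := ∏ i ∈ Finset.range a, (1 - Polynomial.X ^ (i + 1))

lemma tfac_succ (a : ℕ) : tfac (a + 1) = tfac a * (1 - Polynomial.X ^ (a + 1)) :=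
  Finset.prod_range_succ _ _

lemma tfac_ne_zero (a : ℕ) : tfac a ≠ 0 := by
  refine Finset.prod_ne_zero_iff.2 fun i _ h => ?_
  have := congrArg (Polynomial.eval 0) h
  simp at this

lemma gaussNat_zero_right (a : ℕ) : gaussNat a 0 = 1 := by
  cases a <;> rfl

lemma gaussNat_succ (a b : ℕ) : gaussNat (a + 1) (b + 1) =
    gaussNat a b + Polynomial.X ^ (b + 1) * gaussNat a (b + 1) := rfl

lemma gaussNat_eq_zero : ∀ {a b : ℕ}, a < b → gaussNat a b = 0
  | 0, b + 1, _ => rfl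
  | a + 1, b + 1, h => by
    rw [gaussNat_succ, gaussNat_eq_zero (by omega), gaussNat_eq_zero (by omega)]
    simp

lemma gaussNat_self : ∀ a : ℕ, gaussNat a a = 1
  | 0 => rfl
  | a + 1 => by
    rw [gaussNat_succ, gaussNat_self a, gaussNat_eq_zero (by omega)]
    simp

lemma gaussNat_mul_tfac (a b : ℕ) : gaussNat (a + b) b * (tfac a * tfac b) = tfac (a + b) := by
  obtain ⟨k, hk⟩ : ∃ k, k = a + b := ⟨_, rfl⟩
  induction k generalizing a b with
  | zero =>
    obtain rfl : a = 0 := by omega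
    obtain rfl : b = 0 := by omega
    simp [gaussNat, tfac]
  | succ k ih =>
    rcases a with _ | a
    · simp [gaussNat_self, tfac]
    rcases b with _ | b
    · simp [gaussNat_zero_right, tfac]
    have h1 := ih (a + 1) b (by omega)
    have h2 := ih a (b + 1) (by omega)
    have e1 : a + 1 + (b + 1) = (a + b + 1) + 1 := by ring
    have e2 : a + 1 + b = a + b + 1 := by ring
    have e3 : a + (b + 1) = a + b + 1 := by ring
    rw [e2] at h1
    rw [e3] at h2
    rw [e1, gaussNat_succ, tfac_succ (a + b + 1)]
    rw [tfac_succ] at h1 h2 ⊢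
    rw [tfac_succ b]
    linear_combination (1 - Polynomial.X ^ (b + 1)) * h1 +
      Polynomial.X ^ (b + 1) * (1 - Polynomial.X ^ (a + 1)) * h2

lemma gaussNat_symm (a b : ℕ) : gaussNat (a + b) a = gaussNat (a + b) b := by
  have h1 := gaussNat_mul_tfac a b
  have h2 := gaussNat_mul_tfac b a
  rw [add_comm b a, ← h1, mul_comm (tfac b)] at h2
  exact mul_right_cancel₀ (mul_ne_zero (tfac_ne_zero _) (tfac_ne_zero _)) h2

/-- Both sides are the `t`-trinomial coefficient `(r + M + s; r, M, s)`. -/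
lemma gaussNat_trinomial (r M s : ℕ) : gaussNat (r + M) M * gaussNat (r + M + s) (r + M) =
    gaussNat (M + s) M * gaussNat (r + (M + s)) (M + s) := by
  have h1 := gaussNat_mul_tfac r M
  have h2 := gaussNat_mul_tfac s (r + M)
  have h3 := gaussNat_mul_tfac s M
  have h4 := gaussNat_mul_tfac r (M + s)
  rw [add_comm s] at h2 h3
  refine mul_right_cancel₀ (mul_ne_zero (tfac_ne_zero r) (mul_ne_zero (tfac_ne_zero M)
    (tfac_ne_zero s))) ?_
  calc _ = gaussNat (r + M + s) (r + M) * (tfac s * (gaussNat (r + M) M * (tfac r * tfac M))) := by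
        ring
    _ = tfac (r + M + s) := by rw [h1, h2]
    _ = gaussNat (r + (M + s)) (M + s) * (tfac r * (gaussNat (M + s) M * (tfac s * tfac M))) := by
        rw [h3, h4, add_assoc]
    _ = _ := by ring

/-- The `t`-Vandermonde convolution. -/
lemma gaussNat_vandermonde (n σ r : ℕ) : gaussNat (n + σ) r =
    ∑ p ∈ Finset.HasAntidiagonal.antidiagonal r,
      gaussNat σ p.1 * gaussNat n p.2 * Polynomial.X ^ ((σ - p.1) * p.2) := by
  induction σ generalizing r with
  | zero =>
    rw [Finset.sum_eq_single (0, r)]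
    · simp [gaussNat_zero_right]
    · rintro ⟨a, b⟩ h hne
      rw [Finset.HasAntidiagonal.mem_antidiagonal] at h
      have : 0 < a := by
        rcases Nat.eq_zero_or_pos a with rfl | h'
        · simp_all
        · exact h'
      simp [gaussNat_eq_zero this]
    · simp
  | succ σ ih =>
    rcases r with _ | r
    · simp [gaussNat_zero_right]
    · rw [← add_assoc, gaussNat_succ, ih, ih, Finset.Nat.sum_antidiagonal_succ,
        Finset.Nat.sum_antidiagonal_succ, mul_add, Finset.mul_sum, add_left_comm,
        ← Finset.sum_add_distrib]
      congr 1
      · simp [gaussNat_zero_right]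
        ring
      · refine Finset.sum_congr rfl fun p hp => ?_
        rw [Finset.HasAntidiagonal.mem_antidiagonal] at hp
        rw [gaussNat_succ]
        have e : σ + 1 - (p.1 + 1) = σ - p.1 := by omega
        rw [e]
        rcases Nat.lt_or_ge p.1 σ with h | h
        · obtain ⟨d, rfl⟩ : ∃ d, σ = p.1 + 1 + d := ⟨σ - (p.1 + 1), by omega⟩
          have e1 : p.1 + 1 + d - p.1 = d + 1 := by omega
          have e2 : p.1 + 1 + d - (p.1 + 1) = d := by omega
          rw [e1, e2, ← hp]
          ring
        · rw [gaussNat_eq_zero (show σ < p.1 + 1 by omega)]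
          ring

lemma gaussInt_natCast (a b : ℕ) : gaussInt a b = gaussNat a b := by
  by_cases h : b ≤ a
  · simp [gaussInt, h]
  · simp [gaussInt, h, gaussNat_eq_zero (not_le.1 h)]

lemma gaussInt_neg (a : ℤ) {b : ℤ} (h : b < 0) : gaussInt a b = 0 := by
  rw [gaussInt, if_neg (by omega)]

/-- The convolution identity behind the summation over one variable `λ_j`. -/
lemma gaussInt_convolution (r σ s : ℕ) (M : ℤ) :
    gaussInt (r + M) M * gaussInt (r + M - σ + s) (r + M - σ) =
      ∑ p ∈ Finset.HasAntidiagonal.antidiagonal r, gaussNat σ p.1 * Polynomial.X ^ ((σ - p.1) * p.2) *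
        (gaussInt (M - σ + p.1 + s) (M - σ + p.1) *
          gaussInt (p.2 + (M - σ + p.1 + s)) (M - σ + p.1 + s)) := by
  rcases lt_or_ge M 0 with hM | hM
  · rw [gaussInt_neg _ hM, zero_mul]
    refine (Finset.sum_eq_zero fun p _ => ?_).symm
    rcases Nat.lt_or_ge σ p.1 with h | h
    · simp [gaussNat_eq_zero h]
    · rw [gaussInt_neg _ (show M - σ + p.1 < 0 by omega)]
      simp
  obtain ⟨M, rfl⟩ := Int.eq_ofNat_of_zero_le hM
  rcases Nat.lt_or_ge (r + M) σ with h | h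
  · rw [gaussInt_neg _ (show (r : ℤ) + M - σ < 0 by omega), mul_zero]
    refine (Finset.sum_eq_zero fun p hp => ?_).symm
    rw [Finset.HasAntidiagonal.mem_antidiagonal] at hp
    rw [gaussInt_neg _ (show (M : ℤ) - σ + p.1 < 0 by omega)]
    simp
  obtain ⟨n, hn⟩ : ∃ n, r + M = n + σ := ⟨r + M - σ, by omega⟩
  have e1 : (r : ℤ) + M - σ = n := by omega
  have e2 : (r : ℤ) + M - σ + s = ((n + s : ℕ) : ℤ) := by push_cast; omega
  rw [e2, e1, gaussInt_natCast, ← Nat.cast_add, gaussInt_natCast, ← gaussNat_symm, hn,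
    gaussNat_vandermonde, Finset.sum_mul]
  refine Finset.sum_congr rfl fun p hp => ?_
  rw [Finset.HasAntidiagonal.mem_antidiagonal] at hp
  rcases Nat.lt_or_ge n p.2 with h' | h'
  · rw [gaussNat_eq_zero h', gaussInt_neg _ (show (M : ℤ) - σ + p.1 < 0 by omega)]
    simp
  obtain ⟨k, rfl⟩ : ∃ k, n = p.2 + k := ⟨n - p.2, by omega⟩
  have e3 : (M : ℤ) - σ + p.1 = k := by omega
  rw [e3, ← Nat.cast_add, ← Nat.cast_add, gaussInt_natCast, gaussInt_natCast,
    ← gaussNat_trinomial, gaussNat_symm]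
  ring

/-- The expansion of `1 / (z y; t)_{M+1}`. -/
lemma mk_gauss_mul_pochh (y : Polynomial ℤ) (M : ℕ) :
    (PowerSeries.mk fun r => y ^ r * gaussNat (r + M) M) *
      pochh (PowerSeries.X * PowerSeries.C y) (PowerSeries.C Polynomial.X) (M + 1) = 1 := by
  induction M with
  | zero =>
    simp only [pochh, Finset.prod_range_one, pow_zero, mul_one, zero_add]
    refine PowerSeries.ext fun r => ?_
    rcases r with _ | r
    · simp [gaussNat_zero_right]
    · rw [mul_sub, mul_one, mul_left_comm, map_sub, PowerSeries.coeff_succ_X_mul,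
        PowerSeries.coeff_mul_C]
      simp [gaussNat_zero_right, PowerSeries.coeff_one, pow_succ]
  | succ M ih =>
    have key : (PowerSeries.mk fun r => y ^ r * gaussNat (r + (M + 1)) (M + 1)) *
        (1 - PowerSeries.X * PowerSeries.C y * PowerSeries.C Polynomial.X ^ (M + 1)) =
        PowerSeries.mk fun r => y ^ r * gaussNat (r + M) M := by
      refine PowerSeries.ext fun r => ?_
      rcases r with _ | r
      · simp [gaussNat_self]
      · rw [mul_sub, mul_one, mul_assoc PowerSeries.X, mul_left_comm, map_sub,
          PowerSeries.coeff_succ_X_mul, ← map_pow, ← map_mul, PowerSeries.coeff_mul_C]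
        simp only [PowerSeries.coeff_mk]
        rw [show r + 1 + (M + 1) = (r + M + 1) + 1 by ring, gaussNat_succ,
          show r + 1 + M = r + M + 1 by ring, show r + (M + 1) = r + M + 1 by ring]
        ring
    rw [pochh, Finset.prod_range_succ, ← pochh, mul_comm (pochh _ _ _), ← mul_assoc, key, ih]

end Gauss

/-! ### The power series of `Φ` -/

section Phi

/-- Extension by zero of a tuple. -/
def acc {n : ℕ} (f : Fin n → ℕ) (a : ℕ) : ℕ := if h : a < n then f ⟨a, h⟩ else 0

lemma acc_snoc_lt {n : ℕ} (f : Fin n → ℕ) (x a : ℕ) (h : a < n) :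
    acc (Fin.snoc (α := fun _ => ℕ) f x) a = acc f a := by
  simp only [acc, h, show a < n + 1 by omega, dite_true]
  exact Fin.snoc_castSucc (α := fun _ => ℕ) x f ⟨a, h⟩

lemma acc_snoc_self {n : ℕ} (f : Fin n → ℕ) (x : ℕ) :
    acc (Fin.snoc (α := fun _ => ℕ) f x) n = x := by
  simp only [acc, Nat.lt_succ_self, dite_true]
  exact Fin.snoc_last (α := fun _ => ℕ) x f

lemma sum_piFinset_snoc {α R : Type*} [AddCommMonoid R] (n : ℕ) (S : ℕ → Finset α)
    (F : (Fin (n + 1) → α) → R) :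
    ∑ f ∈ Fintype.piFinset (fun j : Fin (n + 1) => S j), F f =
      ∑ f ∈ Fintype.piFinset (fun j : Fin n => S j), ∑ x ∈ S n,
        F (Fin.snoc (α := fun _ => α) f x) := by
  rw [← Finset.sum_product']
  refine Finset.sum_nbij' (fun f => (Fin.init f, f (Fin.last n)))
    (fun p => Fin.snoc (α := fun _ => α) p.1 p.2) ?_ ?_ ?_ ?_ ?_
  · intro f hf
    rw [Fintype.mem_piFinset] at hf
    rw [Finset.mem_product, Fintype.mem_piFinset]
    exact ⟨fun j => by simpa [Fin.init] using hf j.castSucc, by simpa using hf (Fin.last n)⟩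
  · rintro ⟨f, x⟩ hp
    rw [Finset.mem_product, Fintype.mem_piFinset] at hp
    rw [Fintype.mem_piFinset]
    intro j
    refine Fin.lastCases ?_ (fun j => ?_) j
    · simpa using hp.2
    · simpa using hp.1 j
  · intro f _
    exact Fin.snoc_init_self f
  · rintro ⟨f, x⟩ _
    simp
  · intro f _
    exact congrArg F (Fin.snoc_init_self f).symm

/-- Iteration of a one-step recursion as a sum over paths. -/
lemma sum_paths {R : Type*} [CommRing R] (c σ : ℕ → ℕ) (H : ℕ → ℕ → R) (w : ℕ → ℕ → ℕ → R)
    (n : ℕ) (hc : ∀ k < n, c (k + 1) = c k + σ k)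
    (hH : ∀ k < n, ∀ L ≤ c k, H k L = ∑ x ∈ Finset.range (σ k + 1), w k L x * H (k + 1) (L + x)) :
    H 0 0 = ∑ f ∈ Fintype.piFinset (fun j : Fin n => Finset.range (σ j + 1)),
      (∏ j ∈ Finset.range n, w j (∑ a ∈ Finset.range j, acc f a) (acc f j)) *
        H n (∑ a ∈ Finset.range n, acc f a) := by
  induction n with
  | zero => simp
  | succ n ih =>
    rw [ih (fun k hk => hc k (by omega)) (fun k hk => hH k (by omega)),
      sum_piFinset_snoc n (fun j => Finset.range (σ j + 1))]
    refine Finset.sum_congr rfl fun f hf => ?_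
    rw [Fintype.mem_piFinset] at hf
    have hle : ∀ k ≤ n, ∑ a ∈ Finset.range k, acc f a ≤ c k := by
      intro k hk
      induction k with
      | zero => simp
      | succ k ihk =>
        rw [Finset.sum_range_succ, hc k (by omega)]
        have := Finset.mem_range.1 (hf ⟨k, by omega⟩)
        have e : acc f k = f ⟨k, by omega⟩ := by simp [acc, show k < n by omega]
        have := ihk (by omega)
        rw [e]
        dsimp only at *
        omega
    rw [hH n (by omega) _ (hle n le_rfl), Finset.mul_sum]
    refine Finset.sum_congr rfl fun x _ => ?_
    have e : ∀ k ≤ n, ∑ a ∈ Finset.range k, acc (Fin.snoc (α := fun _ => ℕ) f x) a =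
        ∑ a ∈ Finset.range k, acc f a := fun k hk => Finset.sum_congr rfl fun a ha =>
      acc_snoc_lt f x a (by rw [Finset.mem_range] at ha; omega)
    rw [Finset.prod_range_succ, Finset.sum_range_succ, e n le_rfl, acc_snoc_self, mul_assoc]
    congr 1
    refine Finset.prod_congr rfl fun j hj => ?_
    rw [Finset.mem_range] at hj
    rw [e j hj.le, acc_snoc_lt f x j hj]

/-- The coefficient of `z^m` in the expansion of `Φ_{ν|ν̃}(z) / (z;t)_{B+1}`. -/
def wtInt (N : ℕ) (ν nt : ℕ → ℕ) (m : ℕ) : Polynomial ℤ :=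
  ∏ k ∈ Finset.range N, gaussInt ((m : ℤ) + nt (k + 1) - nuc ν k) ((m : ℤ) + nuc nt k - nuc ν k)

/-- The factors of `wtInt` with index at least `k`. -/
def wtTail (N : ℕ) (ν nt : ℕ → ℕ) (k m : ℕ) : Polynomial ℤ :=
  ∏ a ∈ Finset.Ico k N, gaussInt ((m : ℤ) + nt (a + 1) - nuc ν a) ((m : ℤ) + nuc nt a - nuc ν a)

/-- The closed form of the sum over `λ_{k+1}, …, λ_{N-1}` in `Φ`, for a fixed value `L` of
`λ_1 + ⋯ + λ_k`. -/
def phiTail (N B : ℕ) (ν nt : ℕ → ℕ) (k L : ℕ) : PowerSeries (Polynomial ℤ) :=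
  pochh (PowerSeries.X * PowerSeries.C (Polynomial.X ^ (nuc ν k - L)))
      (PowerSeries.C Polynomial.X) (B + 1 - (nuc ν k - L)) *
    PowerSeries.mk fun r => (Polynomial.X ^ (nuc ν k - L)) ^ r *
      gaussInt (r + ((nt (k + 1) : ℤ) - nuc ν k + L)) ((nt (k + 1) : ℤ) - nuc ν k + L) *
        wtTail N ν nt (k + 1) (r + L)

lemma pochh_add {R : Type*} [CommRing R] (w t : R) (a b : ℕ) :
    pochh w t (a + b) = pochh w t a * pochh (w * t ^ a) t b := by
  rw [pochh, Finset.prod_range_add]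
  congr 1
  refine Finset.prod_congr rfl fun i _ => ?_
  ring

lemma phiTail_zero (N B : ℕ) (hN : 1 ≤ N) (ν nt : ℕ → ℕ) : phiTail N B ν nt 0 0 =
    pochh PowerSeries.X (PowerSeries.C Polynomial.X) (B + 1) *
      PowerSeries.mk (wtInt N ν nt) := by
  rw [phiTail]
  simp only [nuc, if_true, Nat.sub_self, pow_zero, map_one, mul_one, Nat.sub_zero, one_pow, one_mul]
  refine congrArg _ (PowerSeries.ext fun r => ?_)
  simp only [PowerSeries.coeff_mk, wtInt, wtTail]
  rw [Finset.range_eq_Ico, Finset.prod_eq_prod_Ico_succ_bot (show 0 < N by omega)]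
  simp only [nuc, if_true, add_zero, Nat.cast_zero, sub_zero, zero_add]
  rw [← Nat.cast_add, gaussInt_natCast, gaussInt_natCast, gaussNat_symm]

lemma phiTail_last (n B : ℕ) (ν nt : ℕ → ℕ) (hB : nt (n + 1) = B) (L : ℕ) (hL : L ≤ nuc ν n)
    (hν : nuc ν n ≤ B) : phiTail (n + 1) B ν nt n L = 1 := by
  obtain ⟨M, hM⟩ : ∃ M, B = (nuc ν n - L) + M := ⟨B - (nuc ν n - L), by omega⟩
  have e : ((nt (n + 1) : ℤ) - nuc ν n + L) = (M : ℕ) := by omega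
  rw [phiTail, mul_comm, e]
  have e2 : B + 1 - (nuc ν n - L) = M + 1 := by omega
  rw [e2, ← mk_gauss_mul_pochh (Polynomial.X ^ (nuc ν n - L)) M]
  refine congrArg (· * _) (PowerSeries.ext fun r => ?_)
  simp only [PowerSeries.coeff_mk, wtTail]
  rw [← Nat.cast_add, gaussInt_natCast]
  simp

set_option maxHeartbeats 1000000 in
/-- The summation over the single variable `λ_{k+1}`, which is `gaussInt_convolution` coefficientwise. -/
lemma phiTail_step (N B : ℕ) (ν nt : ℕ → ℕ) (k : ℕ) (hk : k + 1 < N)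
    (hν : nuc ν k ≤ ν (k + 1)) (hνB : ν (k + 1) ≤ B) (hnt : nt (k + 1) ≤ nt (k + 2)) (L : ℕ)
    (hL : L ≤ nuc ν k) :
    phiTail N B ν nt k L = ∑ x ∈ Finset.range (sigv ν (k + 1) + 1),
      ((PowerSeries.X * PowerSeries.C (Polynomial.X ^ (nuc ν k - L))) ^ x *
        pochh (PowerSeries.X * PowerSeries.C (Polynomial.X ^ (nuc ν k - L)))
          (PowerSeries.C Polynomial.X) (sigv ν (k + 1) - x) *
        PowerSeries.C (gaussInt (sigv ν (k + 1)) x) *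
        PowerSeries.C (gaussInt ((nt (k + 2) : ℤ) - ν (k + 1) + (L + x : ℕ))
          ((nt (k + 1) : ℤ) - ν (k + 1) + (L + x : ℕ)))) * phiTail N B ν nt (k + 1) (L + x) := by
  obtain ⟨σ, hσ⟩ : ∃ σ, sigv ν (k + 1) = σ := ⟨_, rfl⟩
  have hnuc : ∀ ρ : ℕ → ℕ, nuc ρ (k + 1) = ρ (k + 1) := fun ρ => by rw [nuc, if_neg (by omega)]
  have hσ' : ν (k + 1) = nuc ν k + σ := by
    rw [← hσ, sigv, Nat.add_sub_cancel, hnuc]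
    omega
  obtain ⟨c, hc⟩ : ∃ c, nuc ν k = c + L := ⟨nuc ν k - L, by omega⟩
  obtain ⟨s, hs⟩ : ∃ s, nt (k + 2) = nt (k + 1) + s := ⟨nt (k + 2) - nt (k + 1), by omega⟩
  have hc0 : nuc ν k - L = c := by omega
  have hc1 : ∀ x ≤ σ, nuc ν (k + 1) - (L + x) = c + (σ - x) := by
    intro x hx
    rw [hnuc]
    omega
  rw [hσ]
  set P : PowerSeries (Polynomial ℤ) := pochh (PowerSeries.X * PowerSeries.C (Polynomial.X ^ c))
      (PowerSeries.C Polynomial.X) (B + 1 - c) with hP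
  -- the Pochhammer symbol in front splits off the factor occurring in the sum
  have hsplit : ∀ x ≤ σ, pochh (PowerSeries.X * PowerSeries.C (Polynomial.X ^ c))
      (PowerSeries.C Polynomial.X) (σ - x) *
      pochh (PowerSeries.X * PowerSeries.C (Polynomial.X ^ (c + (σ - x))))
        (PowerSeries.C Polynomial.X) (B + 1 - (c + (σ - x))) = P := by
    intro x hx
    rw [hP, show B + 1 - c = (σ - x) + (B + 1 - (c + (σ - x))) by omega, pochh_add]
    have e : PowerSeries.X * PowerSeries.C ((Polynomial.X : Polynomial ℤ) ^ (c + (σ - x))) =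
        PowerSeries.X * PowerSeries.C (Polynomial.X ^ c) *
          PowerSeries.C Polynomial.X ^ (σ - x) := by
      rw [pow_add, map_mul, ← map_pow PowerSeries.C (Polynomial.X : Polynomial ℤ) (σ - x), mul_assoc]
    rw [e]
  rw [phiTail, hc0, ← hP]
  have step : ∀ x ∈ Finset.range (σ + 1),
      ((PowerSeries.X * PowerSeries.C (Polynomial.X ^ c)) ^ x *
        pochh (PowerSeries.X * PowerSeries.C (Polynomial.X ^ c))
          (PowerSeries.C Polynomial.X) (σ - x) *
        PowerSeries.C (gaussInt σ x) *
        PowerSeries.C (gaussInt ((nt (k + 2) : ℤ) - ν (k + 1) + (L + x : ℕ))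
          ((nt (k + 1) : ℤ) - ν (k + 1) + (L + x : ℕ)))) * phiTail N B ν nt (k + 1) (L + x) =
      P * (PowerSeries.X ^ x * (PowerSeries.C ((Polynomial.X ^ c) ^ x * gaussNat σ x *
        gaussInt ((nt (k + 2) : ℤ) - ν (k + 1) + (L + x : ℕ))
          ((nt (k + 1) : ℤ) - ν (k + 1) + (L + x : ℕ))) *
        PowerSeries.mk fun r => (Polynomial.X ^ (c + (σ - x))) ^ r *
          gaussInt (r + ((nt (k + 2) : ℤ) - ν (k + 1) + (L + x : ℕ)))
            ((nt (k + 2) : ℤ) - ν (k + 1) + (L + x : ℕ)) *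
          wtTail N ν nt (k + 2) (r + (L + x)))) := by
    intro x hx
    have hx' : x ≤ σ := by rw [Finset.mem_range] at hx; omega
    rw [phiTail, hc1 x hx', ← hsplit x hx', gaussInt_natCast]
    rw [hnuc, mul_pow, ← map_pow, map_mul, map_mul]
    ring
  rw [Finset.sum_congr rfl step, ← Finset.mul_sum]
  refine congrArg _ (PowerSeries.ext fun r => ?_)
  rw [map_sum, PowerSeries.coeff_mk]
  have coeff : ∀ x ∈ Finset.range (σ + 1), PowerSeries.coeff r
      (PowerSeries.X ^ x * (PowerSeries.C ((Polynomial.X ^ c) ^ x * gaussNat σ x *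
        gaussInt ((nt (k + 2) : ℤ) - ν (k + 1) + (L + x : ℕ))
          ((nt (k + 1) : ℤ) - ν (k + 1) + (L + x : ℕ))) *
        PowerSeries.mk fun r => (Polynomial.X ^ (c + (σ - x))) ^ r *
          gaussInt (r + ((nt (k + 2) : ℤ) - ν (k + 1) + (L + x : ℕ)))
            ((nt (k + 2) : ℤ) - ν (k + 1) + (L + x : ℕ)) *
          wtTail N ν nt (k + 2) (r + (L + x)))) =
      if x ≤ r then (Polynomial.X ^ c) ^ r * (gaussNat σ x * Polynomial.X ^ ((σ - x) * (r - x)) *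
        (gaussInt ((nt (k + 1) : ℤ) - nuc ν k + L - σ + x + s)
          ((nt (k + 1) : ℤ) - nuc ν k + L - σ + x) *
          gaussInt ((r - x : ℕ) + ((nt (k + 1) : ℤ) - nuc ν k + L - σ + x + s))
            ((nt (k + 1) : ℤ) - nuc ν k + L - σ + x + s))) *
          wtTail N ν nt (k + 2) (r + L) else 0 := by
    intro x _
    split_ifs with h
    · obtain ⟨u, rfl⟩ : ∃ u, r = x + u := ⟨r - x, by omega⟩
      rw [add_comm x u, PowerSeries.coeff_X_pow_mul, PowerSeries.coeff_C_mul, PowerSeries.coeff_mk]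
      have e1 : (nt (k + 2) : ℤ) - ν (k + 1) + (L + x : ℕ) =
          (nt (k + 1) : ℤ) - nuc ν k + L - σ + x + s := by rw [hs, hσ']; push_cast; ring
      have e2 : (nt (k + 1) : ℤ) - ν (k + 1) + (L + x : ℕ) =
          (nt (k + 1) : ℤ) - nuc ν k + L - σ + x := by rw [hσ']; push_cast; ring
      rw [e1, e2, show u + x - x = u by omega, show u + (L + x) = u + x + L by ring]
      ring
    · rw [PowerSeries.coeff_X_pow_mul', if_neg h]
  rw [Finset.sum_congr rfl coeff]
  have hw : wtTail N ν nt (k + 1) (r + L) =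
      gaussInt (r + ((nt (k + 1) : ℤ) - nuc ν k + L) - σ + s)
        (r + ((nt (k + 1) : ℤ) - nuc ν k + L) - σ) * wtTail N ν nt (k + 2) (r + L) := by
    rw [wtTail, Finset.prod_eq_prod_Ico_succ_bot hk, ← wtTail]
    congr 2
    · rw [hnuc, hs, hσ']; push_cast; ring
    · rw [hnuc, hnuc, hσ']; push_cast; ring
  rw [hw, mul_assoc, ← mul_assoc (gaussInt _ _), gaussInt_convolution,
    Finset.Nat.sum_antidiagonal_eq_sum_range_succ_mk, Finset.sum_mul, Finset.mul_sum]
  have e3 : ∀ a b : ℕ, ∀ g : ℕ → Polynomial ℤ,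
      ∑ x ∈ Finset.range (a + 1), (if x ≤ b then g x else 0) =
        ∑ x ∈ (Finset.range (a + 1)).filter (· ≤ b), g x := fun a b g => by
    rw [Finset.sum_filter]
  rw [e3]
  symm
  have e4 : (Finset.range (σ + 1)).filter (· ≤ r) ⊆ Finset.range r.succ := by
    intro x
    simp only [Finset.mem_filter, Finset.mem_range]
    omega
  rw [← Finset.sum_subset e4]
  · exact Finset.sum_congr rfl fun x _ => by ring
  · intro x hx hx'
    simp only [Finset.mem_filter, Finset.mem_range] at hx hx'
    rw [gaussNat_eq_zero (show σ < x by omega)]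
    ring

/-- The power series expansion of `Φ_{ν|ν̃}` when `ν` and `ν̃` have the same last entry `B`. -/
lemma PhiPoly_coe (N B : ℕ) (hN : 1 ≤ N) (ν nt : ℕ → ℕ)
    (hν : ∀ k, 1 ≤ k → k < N → ν k ≤ ν (k + 1)) (hnt : ∀ k, 1 ≤ k → k < N → nt k ≤ nt (k + 1))
    (hνN : ν N = B) (hntN : nt N = B) :
    ((PhiPoly N ν nt : Polynomial (Polynomial ℤ)) : PowerSeries (Polynomial ℤ)) =
      pochh PowerSeries.X (PowerSeries.C Polynomial.X) (B + 1) *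
        PowerSeries.mk (wtInt N ν nt) := by
  obtain ⟨n, rfl⟩ : ∃ n, N = n + 1 := ⟨N - 1, by omega⟩
  have hnuc : ∀ k, nuc ν (k + 1) = ν (k + 1) := fun k => by rw [nuc, if_neg (by omega)]
  have hmono : ∀ k ≤ n, nuc ν k ≤ ν (k + 1) := by
    intro k hk
    rcases k with _ | k
    · simp [nuc]
    · rw [hnuc]; exact hν _ (by omega) (by omega)
  have hB : ∀ d ≤ n, ν (n - d + 1) ≤ B := by
    intro d hd
    induction d with
    | zero => simp [hνN]
    | succ d ih =>
      refine le_trans ?_ (ih (by omega))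
      have := hν (n - (d + 1) + 1) (by omega) (by omega)
      rwa [show n - (d + 1) + 1 + 1 = n - d + 1 by omega] at this
  have hB' : ∀ k ≤ n, ν (k + 1) ≤ B := fun k hk => by
    have := hB (n - k) (by omega)
    rwa [show n - (n - k) + 1 = k + 1 by omega] at this
  rw [← phiTail_zero (n + 1) B hN]
  rw [sum_paths (nuc ν) (fun k => sigv ν (k + 1)) (phiTail (n + 1) B ν nt)
    (fun k L x => ((PowerSeries.X * PowerSeries.C (Polynomial.X ^ (nuc ν k - L))) ^ x *
        pochh (PowerSeries.X * PowerSeries.C (Polynomial.X ^ (nuc ν k - L)))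
          (PowerSeries.C Polynomial.X) (sigv ν (k + 1) - x) *
        PowerSeries.C (gaussInt (sigv ν (k + 1)) x) *
        PowerSeries.C (gaussInt ((nt (k + 2) : ℤ) - ν (k + 1) + (L + x : ℕ))
          ((nt (k + 1) : ℤ) - ν (k + 1) + (L + x : ℕ))))) n
    (fun k hk => by
      have := hmono k hk.le
      rw [hnuc, sigv, hnuc, Nat.add_sub_cancel]; omega)
    (fun k hk L hL => phiTail_step _ _ _ _ k (by omega) (hmono k hk.le) (hB' k hk.le)
      (hnt _ (by omega) (by omega)) L hL)]
  rw [PhiPoly, ← Polynomial.coeToPowerSeries.ringHom_apply, map_sum]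
  refine Finset.sum_congr rfl fun f hf => ?_
  rw [Fintype.mem_piFinset] at hf
  have hacc : ∀ j, lamv (n + 1) f (j + 1) = acc f j := by
    intro j
    simp only [lamv, acc, Nat.add_sub_cancel]
  have hsum : ∀ j, lamsum (n + 1) f j = ∑ a ∈ Finset.range j, acc f a := by
    intro j
    rw [lamsum, Finset.range_eq_Ico, ← Finset.sum_congr rfl fun a _ => hacc a,
      Finset.sum_Ico_add' (fun a => lamv (n + 1) f a) 0 j 1]
    rfl
  have hle : ∀ k ≤ n, ∑ a ∈ Finset.range k, acc f a ≤ nuc ν k := by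
    intro k hk
    induction k with
    | zero => simp
    | succ k ihk =>
      rw [Finset.sum_range_succ]
      have h1 := Finset.mem_range.1 (hf ⟨k, by omega⟩)
      have e : acc f k = f ⟨k, by omega⟩ := by simp [acc, show k < n by omega]
      have h2 := ihk (by omega)
      have h3 := hmono k (by omega)
      rw [e]
      dsimp only at h1
      rw [sigv, Nat.add_sub_cancel, hnuc] at h1
      rw [hnuc]
      omega
  rw [phiTail_last n B ν nt hntN _ (hle n le_rfl) ((hmono n le_rfl).trans hνN.le), mul_one, map_prod,
    Nat.add_sub_cancel]
  have hI : Finset.Icc 1 n = Finset.Ico (0 + 1) (n + 1) := rfl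
  rw [hI, ← Finset.prod_Ico_add' (fun j => Polynomial.coeToPowerSeries.ringHom _) 0 n 1,
    ← Finset.range_eq_Ico]
  refine Finset.prod_congr rfl fun j _ => ?_
  have hpoch : ∀ c b : ℕ, Polynomial.coeToPowerSeries.ringHom (pochh
      ((Polynomial.X : Polynomial (Polynomial ℤ)) * Polynomial.C ((Polynomial.X : Polynomial ℤ) ^ c))
      (Polynomial.C (Polynomial.X : Polynomial ℤ)) b) =
      pochh (PowerSeries.X * PowerSeries.C (Polynomial.X ^ c)) (PowerSeries.C Polynomial.X) b := by
    intro c b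
    rw [pochh, pochh, map_prod]
    refine Finset.prod_congr rfl fun i _ => ?_
    simp only [map_sub, map_one, map_mul, map_pow, Polynomial.coeToPowerSeries.ringHom_apply,
      Polynomial.coe_X, Polynomial.coe_C]
  rw [map_mul, map_mul, map_mul, hpoch, map_pow, map_mul]
  simp only [Polynomial.coeToPowerSeries.ringHom_apply, Polynomial.coe_X, Polynomial.coe_C,
    hsum, hacc, Nat.add_sub_cancel, Finset.sum_range_succ]

end Phi

/-! ### Evaluation of the matrix elements -/

section Weights

variable {K : Type*} [Field K]

/-- Evaluation of integer polynomials at `t`. -/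
def evT (t : K) : Polynomial ℤ →+* K := Polynomial.eval₂RingHom (Int.castRingHom K) t

lemma evT_X (t : K) : evT t Polynomial.X = t := by simp [evT]

lemma evT_tfac (t : K) (a : ℕ) : evT t (tfac a) = ∏ i ∈ Finset.range a, (1 - t ^ (i + 1)) := by
  simp [tfac, evT_X]

/-- The ratio `(1 - t^M) ⋯ (1 - t^{M-s+1}) / ((1 - t) ⋯ (1 - t^s))`. -/
def ratW (t : K) (s : ℕ) (M : ℤ) : K :=
  ∏ a ∈ Finset.range s, (1 - t ^ (M - a)) / (1 - t ^ (a + 1))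

lemma ratW_eq_zero (t : K) {s : ℕ} {M : ℤ} (h0 : 0 ≤ M) (h : M - s < 0) : ratW t s M = 0 := by
  obtain ⟨a, rfl⟩ := Int.eq_ofNat_of_zero_le h0
  refine Finset.prod_eq_zero (Finset.mem_range.2 (show a < s by omega)) ?_
  simp

lemma ratW_eq (t : K) (ht : ∀ d : ℕ, 1 - t ^ (d + 1) ≠ 0) {s : ℕ} {M : ℤ} (h : 0 ≤ M - s) :
    ratW t s M = evT t (gaussInt M (M - s)) := by
  obtain ⟨b, hb⟩ := Int.eq_ofNat_of_zero_le h
  obtain rfl : M = ((s + b : ℕ) : ℤ) := by push_cast; omega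
  have hf : ∀ a : ℕ, evT t (tfac a) ≠ 0 := fun a => by
    rw [evT_tfac]
    exact Finset.prod_ne_zero_iff.2 fun i _ => ht i
  have key := congrArg (evT t) (gaussNat_mul_tfac s b)
  rw [map_mul, map_mul] at key
  rw [hb, gaussInt_natCast, ratW, Finset.prod_div_distrib, ← evT_tfac, div_eq_iff (hf s)]
  refine mul_right_cancel₀ (hf b) ?_
  rw [mul_assoc, key, add_comm s b, evT_tfac, evT_tfac, Finset.prod_range_add, mul_comm]
  congr 1
  rw [← Finset.prod_range_reflect]
  refine Finset.prod_congr rfl fun i hi => ?_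
  rw [Finset.mem_range] at hi
  rw [← zpow_natCast]
  congr 2
  omega

/-- A path along which `m + x_k - y_k` becomes negative has a vanishing factor on both sides: the
Gaussian binomial vanishes when the lower entry is negative, the ratio when it returns to the
nonnegative integers. -/
lemma prod_ratW (t : K) (ht : ∀ d : ℕ, 1 - t ^ (d + 1) ≠ 0) (N m : ℕ) (x y : ℕ → ℕ)
    (hx0 : x 0 = 0) (hy0 : y 0 = 0)
    (hx : ∀ k < N, x k ≤ x (k + 1)) (hy : ∀ k < N, y k ≤ y (k + 1)) (hend : y N ≤ m + x N) :
    ∏ k ∈ Finset.range N, ratW t (x (k + 1) - x k) ((m : ℤ) + x (k + 1) - y k) =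
      evT t (wtInt N y x m) := by
  have hnx : ∀ k, nuc x k = x k := fun k => by rw [nuc]; split_ifs with h <;> simp [h, hx0]
  have hny : ∀ k, nuc y k = y k := fun k => by rw [nuc]; split_ifs with h <;> simp [h, hy0]
  have hcast : ∀ k < N, ((x (k + 1) - x k : ℕ) : ℤ) = (x (k + 1) : ℤ) - x k := fun k hk =>
    Nat.cast_sub (hx k hk)
  rw [wtInt, map_prod]
  simp only [hnx, hny]
  by_cases hpos : ∀ k ≤ N, y k ≤ m + x k
  · refine Finset.prod_congr rfl fun k hk => ?_
    rw [Finset.mem_range] at hk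
    have h1 := hpos k hk.le
    have h2 := hcast k hk
    rw [ratW_eq t ht (by omega), show (m : ℤ) + x (k + 1) - y k - ((x (k + 1) - x k : ℕ) : ℤ) =
      m + x k - y k by omega]
  · push Not at hpos
    obtain ⟨k₀, hk₀, hneg⟩ := hpos
    have hlt : k₀ < N := lt_of_le_of_ne hk₀ (by rintro rfl; omega)
    rw [Finset.prod_eq_zero (f := fun k => evT t _) (Finset.mem_range.2 hlt)
      (by rw [gaussInt_neg _ (by omega), map_zero])]
    -- the last time at which the quantity is negative
    obtain ⟨k, hk, hk1, hk2⟩ : ∃ k < N, m + x k < y k ∧ y (k + 1) ≤ m + x (k + 1) := by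
      by_contra! hcon
      have : ∀ d, k₀ + d ≤ N → m + x (k₀ + d) < y (k₀ + d) := by
        intro d
        induction d with
        | zero => intro _; simpa using hneg
        | succ d ih => intro h; exact hcon (k₀ + d) (by omega) (ih (by omega))
      have := this (N - k₀) (by omega)
      rw [show k₀ + (N - k₀) = N by omega] at this
      omega
    have h2 := hcast k hk
    have h3 := hy k hk
    refine Finset.prod_eq_zero (Finset.mem_range.2 hk) (ratW_eq_zero t ?_ ?_) <;> omega

lemma siteW_eq (t : K) (t0 : t ≠ 0) (m : ℤ) (n j s : ℕ) (x y : ℕ → ℤ) :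
    siteW t m n j s x y =
      t ^ ((s : ℤ) * (s - 1) / 2 + ∑ l ∈ Finset.Icc (j + 1) n, (s : ℤ) * (x l - y l)) *
        ratW t s (m + x j - y j) := by
  have hI : Finset.Icc (j + 1) n = Finset.Ioc j n := by
    ext l
    rw [Finset.mem_Icc, Finset.mem_Ioc]
    omega
  have h1 : ∏ a ∈ Finset.range s, t ^ a = t ^ ((s : ℤ) * (s - 1) / 2) := by
    rw [Finset.prod_pow_eq_pow_sum, Finset.sum_range_id, ← zpow_natCast]
    congr 1
    rcases s with _ | s
    · simp
    · push_cast
      simp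
  have h2 : ∀ c : K, c ^ s = ∏ _a ∈ Finset.range s, c := fun c => by simp
  rw [hI, ← Finset.mul_sum, zpow_add₀ t0, ← h1, mul_comm (s : ℤ), zpow_mul, zpow_natCast, ratW,
    siteW, h2, ← Finset.prod_mul_distrib, ← Finset.prod_mul_distrib]
  exact Finset.prod_congr rfl fun a _ => by ring

end Weights

/-! ### Iterated row operators as sums over chains -/

section Chains

/-- The sum of the first `k` of a sequence of displacements. -/
def accS {N : ℕ} (f : Fin N → ℕ × ℕ → ℕ) (k : ℕ) : ℕ × ℕ → ℕ :=
  fun p => ∑ a ∈ Finset.range k, acc (fun b => f b p) a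

lemma accS_zero {N : ℕ} (f : Fin N → ℕ × ℕ → ℕ) : accS f 0 = 0 := by
  funext p
  simp [accS]

lemma accS_succ {N : ℕ} (f : Fin N → ℕ × ℕ → ℕ) (k : ℕ) (hk : k < N) (p : ℕ × ℕ) :
    accS f (k + 1) p = accS f k p + f ⟨k, hk⟩ p := by
  rw [accS, Finset.sum_range_succ, accS]
  simp [acc, hk]

lemma snoc_apply {N : ℕ} (f : Fin N → ℕ × ℕ → ℕ) (s : ℕ × ℕ → ℕ) (p : ℕ × ℕ) :
    (fun b => (Fin.snoc (α := fun _ => ℕ × ℕ → ℕ) f s : Fin (N + 1) → ℕ × ℕ → ℕ) b p) =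
      Fin.snoc (α := fun _ => ℕ) (fun b => f b p) (s p) := by
  funext b
  refine Fin.lastCases ?_ (fun b => ?_) b
  · simp
  · simp

lemma accS_snoc {N : ℕ} (f : Fin N → ℕ × ℕ → ℕ) (s : ℕ × ℕ → ℕ) (k : ℕ) (hk : k ≤ N) :
    accS (Fin.snoc (α := fun _ => ℕ × ℕ → ℕ) f s) k = accS f k := by
  funext p
  refine Finset.sum_congr rfl fun a ha => ?_
  rw [Finset.mem_range] at ha
  rw [snoc_apply, acc_snoc_lt _ _ _ (by omega)]

lemma accS_snoc_last {N : ℕ} (f : Fin N → ℕ × ℕ → ℕ) (s : ℕ × ℕ → ℕ) :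
    accS (Fin.snoc (α := fun _ => ℕ × ℕ → ℕ) f s) (N + 1) = accS f N + s := by
  funext p
  rw [accS_succ _ _ (Nat.lt_succ_self N), accS_snoc _ _ _ le_rfl, Pi.add_apply]
  congr 1
  exact congrFun (Fin.snoc_last (α := fun _ => ℕ × ℕ → ℕ) s f) p

lemma emb_add (s s' : ℕ × ℕ → ℕ) : emb (s + s') = emb s + emb s' := by
  funext p
  simp [emb]

lemma emb_zero : emb 0 = 0 := by
  funext p
  simp [emb]

lemma emb_injective : Function.Injective emb := fun s s' h => by
  funext p
  exact Nat.cast_injective (R := ℤ) (congrFun h p)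

variable {K : Type*} [Field K]

/-- The vector `T_{d_{N-1}} ⋯ T_{d_0} δ_0`. -/
def iterT (t : K) (m : ℕ → ℕ → ℤ) (n : ℕ) (d : ℕ → ℕ) : ℕ → State → K
  | 0 => Pi.single 0 1
  | k + 1 => rowT t m n (d k) (iterT t m n d k)

/-- A matrix element of a product of row operators is a sum over chains. -/
lemma iterT_apply (t : K) (t0 : t ≠ 0) (ht : ∀ d : ℕ, 1 - t ^ (d + 1) ≠ 0) (m : ℕ → ℕ → ℤ)
    (n : ℕ) (d : ℕ → ℕ) (N : ℕ) (ν : State) : iterT t m n d N ν =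
      ∑ f ∈ Fintype.piFinset (fun j : Fin N =>
          Finset.piAntidiag (Finset.Icc 1 n ×ˢ Finset.Icc 1 n) (d j)),
        if emb (accS f N) = ν then
          ∏ k ∈ Finset.range N, rowsW t m n n (emb (accS f (k + 1))) (emb (accS f k)) else 0 := by
  induction N generalizing ν with
  | zero =>
    simp only [iterT, accS_zero, emb_zero, Finset.range_zero, Finset.prod_empty]
    simp [Pi.single_apply, eq_comm]
  | succ N ih =>
    rw [iterT, rowT_apply t t0 ht,
      sum_piFinset_snoc N (fun j => Finset.piAntidiag (Finset.Icc 1 n ×ˢ Finset.Icc 1 n) (d j)),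
      Finset.sum_comm]
    refine Finset.sum_congr rfl fun s _ => ?_
    rw [ih, Finset.mul_sum]
    refine Finset.sum_congr rfl fun f _ => ?_
    rw [accS_snoc_last, emb_add]
    by_cases h : emb (accS f N) = ν - emb s
    · have h' : emb (accS f N) + emb s = ν := by rw [h]; abel
      rw [if_pos h, if_pos h', Finset.prod_range_succ, accS_snoc_last, emb_add, h',
        accS_snoc _ _ _ le_rfl, ← h, mul_comm]
      congr 1
      refine Finset.prod_congr rfl fun k hk => ?_
      rw [Finset.mem_range] at hk
      rw [accS_snoc _ _ _ (by omega), accS_snoc _ _ _ (by omega)]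
    · rw [if_neg h, if_neg (fun h' => h (by rw [← h']; abel)), mul_zero]

lemma iterT_eq_prod (t : K) (m : ℕ → ℕ → ℤ) (n : ℕ) (d : ℕ → ℕ) (N : ℕ) :
    iterT t m n d N = (List.ofFn fun k : Fin N => rowT t m n (d k)).reverse.prod (Pi.single 0 1) := by
  induction N with
  | zero => simp [iterT]
  | succ N ih =>
    rw [iterT, ih, List.ofFn_succ']
    simp

/-- Commuting row operators may be applied in any order. -/
lemma iterT_perm (t : K) (t0 : t ≠ 0) (ht : ∀ d : ℕ, 1 - t ^ (d + 1) ≠ 0) (m : ℕ → ℕ → ℤ)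
    (n : ℕ) (d d' : ℕ → ℕ) (N : ℕ) (h : ∃ e : Equiv.Perm (Fin N), ∀ k : Fin N, d' k = d (e k)) :
    iterT t m n d N = iterT t m n d' N := by
  obtain ⟨e, he⟩ := h
  rw [iterT_eq_prod, iterT_eq_prod]
  have hp : (List.ofFn fun k : Fin N => rowT t m n (d' k)).Perm
      (List.ofFn fun k : Fin N => rowT t m n (d k)) := by
    simp only [he]
    exact Equiv.Perm.ofFn_comp_perm e fun k : Fin N => rowT t m n (d k)
  have hp' : (List.ofFn fun k : Fin N => rowT t m n (d k)).reverse.Perm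
      (List.ofFn fun k : Fin N => rowT t m n (d' k)).reverse :=
    (List.reverse_perm _).trans (hp.symm.trans (List.reverse_perm _).symm)
  rw [hp'.prod_eq' ?_]
  refine List.pairwise_of_forall_mem_list fun a ha b hb => ?_
  rw [List.mem_reverse, List.mem_ofFn] at ha hb
  obtain ⟨x, rfl⟩ := ha
  obtain ⟨y, rfl⟩ := hb
  exact rowT_commute t t0 ht m n _ _

end Chains

/-! ### Admissible families as chains -/

section Families

/-- The common end point of the chains attached to admissible families. -/
def topV (n : ℕ) (lamC : ℕ → ℕ) (p : ℕ × ℕ) : ℕ :=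
  if 1 ≤ p.1 ∧ p.1 ≤ p.2 ∧ p.2 ≤ n then lamC p.2 - lamC (p.2 + 1) else 0

/-- The displacements of a family. -/
def toSteps (n N : ℕ) (f : Fin (n + 1) × Fin (n + 1) × Fin (N + 1) → ℕ) (k : Fin N)
    (p : ℕ × ℕ) : ℕ :=
  nuV n N f p.1 p.2 (k + 1) - nuV n N f p.1 p.2 k

/-- The family with given displacements. -/
def ofSteps (n N : ℕ) (s : Fin N → ℕ × ℕ → ℕ) (q : Fin (n + 1) × Fin (n + 1) × Fin (N + 1)) : ℕ :=
  accS s q.2.2 (q.1, q.2.1)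

variable {n N : ℕ} {lamC mu : ℕ → ℕ} {f : Fin (n + 1) × Fin (n + 1) × Fin (N + 1) → ℕ}

lemma nuV_fin (q : Fin (n + 1) × Fin (n + 1) × Fin (N + 1)) : nuV n N f q.1 q.2.1 q.2.2 = f q := by
  rw [nuV, dif_pos ⟨q.1.2, q.2.1.2, q.2.2.2⟩]

lemma Adm.zero (h : Adm n N lamC mu f) (i j k : ℕ) (hi : ¬(1 ≤ i ∧ i ≤ j ∧ j ≤ n ∧ 1 ≤ k)) :
    nuV n N f i j k = 0 := by
  rw [nuV]
  split_ifs with hlt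
  · exact h.1 _ (by dsimp only; omega)
  · rfl

lemma Adm.mono (h : Adm n N lamC mu f) (i j k : ℕ) (hk : k < N) :
    nuV n N f i j k ≤ nuV n N f i j (k + 1) := by
  by_cases hi : 1 ≤ i ∧ i ≤ j ∧ j ≤ n ∧ 1 ≤ k
  · exact h.2.1 i j k hi.1 hi.2.1 hi.2.2.1 hi.2.2.2 hk
  · rw [h.zero i j k hi]
    exact Nat.zero_le _

lemma Adm.top (h : Adm n N lamC mu f) (i j : ℕ) :
    nuV n N f i j N = topV n lamC (i, j) := by
  rw [topV]
  split_ifs with hi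
  · exact h.2.2.1 i j hi.1 hi.2.1 hi.2.2
  · exact h.zero i j N (by dsimp only at hi; omega)

lemma Adm.accS_toSteps (h : Adm n N lamC mu f) (i j k : ℕ) (hk : k ≤ N) :
    accS (toSteps n N f) k (i, j) = nuV n N f i j k := by
  induction k with
  | zero => rw [accS_zero, h.zero i j 0 (by omega)]; rfl
  | succ k ih =>
    rw [accS_succ _ _ (by omega), ih (by omega)]
    exact Nat.add_sub_cancel' (h.mono i j k (by omega))

/-- Sums over the triangle as sums over the square. -/
lemma sum_square {R : Type*} [AddCommMonoid R] (n : ℕ) (F : ℕ → ℕ → R)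
    (h : ∀ i j, j < i → F i j = 0) :
    ∑ p ∈ Finset.Icc 1 n ×ˢ Finset.Icc 1 n, F p.1 p.2 =
      ∑ i ∈ Finset.Icc 1 n, ∑ j ∈ Finset.Icc i n, F i j := by
  rw [Finset.sum_product]
  refine Finset.sum_congr rfl fun i hi => ?_
  rw [Finset.mem_Icc] at hi
  symm
  refine Finset.sum_subset (Finset.Icc_subset_Icc_left hi.1) fun j hj hj' => h i j ?_
  rw [Finset.mem_Icc] at hj hj'
  omega

lemma sum_Icc_one {R : Type*} [AddCommMonoid R] (N : ℕ) (F : ℕ → R) :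
    ∑ k ∈ Finset.Icc 1 N, F k = ∑ k ∈ Finset.range N, F (k + 1) := by
  have hI : Finset.Icc 1 N = Finset.Ico (0 + 1) (N + 1) := rfl
  rw [hI, ← Finset.sum_Ico_add' F 0 N 1, ← Finset.range_eq_Ico]

lemma Adm.total (h : Adm n N lamC mu f) (k : ℕ) (hk : k ≤ N) :
    ∑ p ∈ Finset.Icc 1 n ×ˢ Finset.Icc 1 n, nuV n N f p.1 p.2 k =
      ∑ a ∈ Finset.range k, mu (a + 1) := by
  rcases Nat.eq_zero_or_pos k with rfl | h0
  · simpa using fun a b _ _ _ _ => h.zero a b 0 (by omega)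
  · rw [sum_square n (fun i j => nuV n N f i j k) (fun i j hij => h.zero i j k (by omega)),
      h.2.2.2 k h0 hk, sum_Icc_one]

lemma Adm.toSteps_mem (h : Adm n N lamC mu f) : toSteps n N f ∈ Fintype.piFinset (fun j : Fin N =>
    Finset.piAntidiag (Finset.Icc 1 n ×ˢ Finset.Icc 1 n) (mu (j + 1))) := by
  rw [Fintype.mem_piFinset]
  intro k
  rw [Finset.mem_piAntidiag]
  constructor
  · have h1 := h.total k k.2.le
    have h2 := h.total (k + 1) k.2
    have h3 : ∑ p ∈ Finset.Icc 1 n ×ˢ Finset.Icc 1 n, nuV n N f p.1 p.2 k +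
        ∑ p ∈ Finset.Icc 1 n ×ˢ Finset.Icc 1 n, toSteps n N f k p =
        ∑ p ∈ Finset.Icc 1 n ×ˢ Finset.Icc 1 n, nuV n N f p.1 p.2 (k + 1) := by
      rw [← Finset.sum_add_distrib]
      exact Finset.sum_congr rfl fun p _ => Nat.add_sub_cancel' (h.mono p.1 p.2 k k.2)
    rw [Finset.sum_range_succ] at h2
    change ∑ p ∈ Finset.Icc 1 n ×ˢ Finset.Icc 1 n, toSteps n N f k p = mu (k + 1)
    omega
  · rintro ⟨i, j⟩ hp
    rw [Finset.mem_product, Finset.mem_Icc, Finset.mem_Icc]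
    by_contra hcon
    refine hp ?_
    rw [toSteps, h.zero i j (k + 1) (by dsimp only at hcon; omega), Nat.zero_sub]

section OfSteps

variable {s : Fin N → ℕ × ℕ → ℕ}

lemma accS_mono (k : ℕ) (p : ℕ × ℕ) : accS s k p ≤ accS s (k + 1) p := by
  rw [accS, accS, Finset.sum_range_succ]
  exact Nat.le_add_right _ _

lemma accS_le (k l : ℕ) (h : k ≤ l) (p : ℕ × ℕ) : accS s k p ≤ accS s l p :=
  monotone_nat_of_le_succ (f := fun k => accS s k p) (fun k => accS_mono k p) h

lemma accS_eq_zero (hs : accS s N = topV n lamC) (i j k : ℕ) (hk : k ≤ N)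
    (hij : ¬(1 ≤ i ∧ i ≤ j ∧ j ≤ n)) : accS s k (i, j) = 0 := by
  have h1 := accS_le (s := s) k N hk (i, j)
  rw [hs, topV, if_neg hij] at h1
  omega

lemma nuV_ofSteps (hs : accS s N = topV n lamC) (i j k : ℕ) (hk : k ≤ N) :
    nuV n N (ofSteps n N s) i j k = accS s k (i, j) := by
  rw [nuV]
  split_ifs with h
  · rfl
  · exact (accS_eq_zero hs i j k hk (by omega)).symm

lemma toSteps_ofSteps (hs : accS s N = topV n lamC) : toSteps n N (ofSteps n N s) = s := by
  funext k p
  rw [toSteps, nuV_ofSteps hs _ _ _ k.2, nuV_ofSteps hs _ _ _ k.2.le, accS_succ _ _ k.2]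
  exact Nat.add_sub_cancel_left _ _

lemma adm_ofSteps (hs : accS s N = topV n lamC) (hmem : s ∈ Fintype.piFinset (fun j : Fin N =>
    Finset.piAntidiag (Finset.Icc 1 n ×ˢ Finset.Icc 1 n) (mu (j + 1)))) :
    Adm n N lamC mu (ofSteps n N s) := by
  rw [Fintype.mem_piFinset] at hmem
  refine ⟨?_, ?_, ?_, ?_⟩
  · rintro ⟨i, j, k⟩ h
    rw [ofSteps]
    dsimp only at h ⊢
    by_cases hk : (k : ℕ) = 0
    · rw [hk, accS_zero]; rfl
    · exact accS_eq_zero hs i j k (by omega) (by omega)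
  · intro i j k _ _ _ _ hk
    rw [nuV_ofSteps hs _ _ _ hk.le, nuV_ofSteps hs _ _ _ hk]
    exact accS_mono k _
  · intro i j hi hij hj
    rw [nuV_ofSteps hs _ _ _ le_rfl, hs, topV, if_pos ⟨hi, hij, hj⟩]
  · rintro k - hk
    rw [← sum_square n (fun i j => nuV n N (ofSteps n N s) i j k)
      (fun i j hij => by rw [nuV_ofSteps hs _ _ _ hk, accS_eq_zero hs _ _ _ hk (by omega)]),
      sum_Icc_one]
    simp only [nuV_ofSteps hs _ _ _ hk]
    induction k with
    | zero => simp [accS_zero]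
    | succ k ih =>
      rw [Finset.sum_range_succ, ← (Finset.mem_piAntidiag.1 (hmem ⟨k, hk⟩)).1]
      simp only [accS_succ _ _ hk]
      rw [Finset.sum_add_distrib, ← ih (by omega)]

end OfSteps

variable {K : Type*} [Field K]

lemma prod_zpow_sum (t : K) (t0 : t ≠ 0) {ι : Type*} (S : Finset ι) (e : ι → ℤ) :
    ∏ i ∈ S, t ^ e i = t ^ ∑ i ∈ S, e i := by
  induction S using Finset.cons_induction with
  | empty => simp
  | cons a S ha ih => rw [Finset.prod_cons, Finset.sum_cons, ih, zpow_add₀ t0]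

/-- The weight of a family is the weight of the corresponding chain. -/
lemma Adm.weight (h : Adm n N lamC mu f) (t : K) (t0 : t ≠ 0)
    (ht : ∀ d : ℕ, 1 - t ^ (d + 1) ≠ 0) (mm : ℕ → ℕ → ℕ) :
    ∏ k ∈ Finset.range N, rowsW t (fun i j => (mm i j : ℤ)) n n
        (emb (accS (toSteps n N f) (k + 1))) (emb (accS (toSteps n N f) k)) =
      t ^ chiZ n N f * ∏ i ∈ Finset.Icc 1 n, ∏ j ∈ Finset.Icc i n,
        evT t (wtInt N (fun k => nuV n N f (i + 1) j k) (fun k => nuV n N f i j k) (mm i j)) := by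
  have row : ∀ k ∈ Finset.range N, rowsW t (fun i j => (mm i j : ℤ)) n n
        (emb (accS (toSteps n N f) (k + 1))) (emb (accS (toSteps n N f) k)) =
      ∏ i ∈ Finset.Icc 1 n, ∏ j ∈ Finset.Icc i n,
        (t ^ ((((nuV n N f i j (k + 1) : ℤ) - nuV n N f i j k) *
            ((nuV n N f i j (k + 1) : ℤ) - nuV n N f i j k - 1)) / 2 +
          ∑ l ∈ Finset.Icc (j + 1) n, ((nuV n N f i j (k + 1) : ℤ) - nuV n N f i j k) *
            ((nuV n N f i l (k + 1) : ℤ) - nuV n N f (i + 1) l k)) *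
        ratW t (nuV n N f i j (k + 1) - nuV n N f i j k)
          ((mm i j : ℤ) + nuV n N f i j (k + 1) - nuV n N f (i + 1) j k)) := by
    intro k hk
    rw [Finset.mem_range] at hk
    have hst : ∀ i j, ((emb (accS (toSteps n N f) (k + 1)) (i, j) -
        emb (accS (toSteps n N f) k) (i, j)).toNat : ℕ) =
        nuV n N f i j (k + 1) - nuV n N f i j k := by
      intro i j
      rw [emb, emb, h.accS_toSteps i j (k + 1) hk, h.accS_toSteps i j k hk.le]
      omega
    refine Finset.prod_congr rfl fun i hi => ?_
    rw [Finset.mem_Icc] at hi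
    rw [← Finset.prod_subset (Finset.Icc_subset_Icc_left hi.1) fun j hj hj' => ?_]
    · refine Finset.prod_congr rfl fun j hj => ?_
      rw [hst, siteW_eq t t0, Nat.cast_sub (h.mono i j k hk)]
      simp only [emb, h.accS_toSteps _ _ _ hk, h.accS_toSteps _ _ _ hk.le]
    · rw [Finset.mem_Icc] at hj hj'
      rw [hst, h.zero i j (k + 1) (by omega), Nat.zero_sub, siteW, Finset.range_zero,
        Finset.prod_empty]
  rw [Finset.prod_congr rfl row]
  simp only [Finset.prod_mul_distrib, prod_zpow_sum t t0]
  congr 1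
  · rw [chiZ, sum_Icc_one]
    simp only [Nat.add_sub_cancel]
  · rw [Finset.prod_comm]
    refine Finset.prod_congr rfl fun i hi => ?_
    rw [Finset.prod_comm]
    refine Finset.prod_congr rfl fun j hj => ?_
    rw [Finset.mem_Icc] at hi hj
    refine prod_ratW t ht N (mm i j) (fun k => nuV n N f i j k) (fun k => nuV n N f (i + 1) j k)
      (h.zero _ _ _ (by omega)) (h.zero _ _ _ (by omega)) (fun k hk => h.mono _ _ _ hk)
      (fun k hk => h.mono _ _ _ hk) ?_
    rw [h.top, h.top, topV, topV, if_pos (show 1 ≤ i ∧ i ≤ j ∧ j ≤ n by omega)]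
    split_ifs <;> dsimp only <;> omega

/-- The sum over admissible families is a matrix element of a product of row operators. -/
lemma sum_admissible (n N M : ℕ) (lamC mu : ℕ → ℕ) (hM : ∀ j, lamC j ≤ M) (t : K)
    (t0 : t ≠ 0) (ht : ∀ d : ℕ, 1 - t ^ (d + 1) ≠ 0) (mm : ℕ → ℕ → ℕ) :
    ∑ f ∈ (Fintype.piFinset fun _ : Fin (n + 1) × Fin (n + 1) × Fin (N + 1) =>
        Finset.range (M + 1)).filter (Adm n N lamC mu),
      t ^ chiZ n N f * ∏ i ∈ Finset.Icc 1 n, ∏ j ∈ Finset.Icc i n,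
        evT t (wtInt N (fun k => nuV n N f (i + 1) j k) (fun k => nuV n N f i j k) (mm i j)) =
    iterT t (fun i j => (mm i j : ℤ)) n (fun k => mu (k + 1)) N (emb (topV n lamC)) := by
  rw [iterT_apply t t0 ht, ← Finset.sum_filter]
  refine Finset.sum_bij' (fun f _ => toSteps n N f) (fun s _ => ofSteps n N s) ?_ ?_ ?_ ?_ ?_
  · intro f hf
    have h := (Finset.mem_filter.1 hf).2
    refine Finset.mem_filter.2 ⟨h.toSteps_mem, congrArg emb ?_⟩
    funext p
    rw [← h.top, ← h.accS_toSteps _ _ _ le_rfl]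
  · intro s hs
    rw [Finset.mem_filter] at hs
    have hs' := emb_injective hs.2
    rw [Finset.mem_filter, Fintype.mem_piFinset]
    refine ⟨fun q => ?_, adm_ofSteps hs' hs.1⟩
    have h1 := accS_le (s := s) q.2.2 N (by omega) (q.1, q.2.1)
    rw [Finset.mem_range, ofSteps]
    refine Nat.lt_succ_of_le (h1.trans ?_)
    rw [hs', topV]
    split_ifs
    · exact (Nat.sub_le _ _).trans (hM _)
    · exact Nat.zero_le _
  · intro f hf
    have h := (Finset.mem_filter.1 hf).2
    funext q
    rw [ofSteps, h.accS_toSteps _ _ _ (by omega), nuV_fin]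
  · intro s hs
    rw [Finset.mem_filter] at hs
    exact toSteps_ofSteps (emb_injective hs.2)
  · intro f hf
    exact ((Finset.mem_filter.1 hf).2.weight t t0 ht mm).symm

end Families

/-! ### Expansion of the partition sum -/

section Expansion

variable {K : Type*} [Field K]

/-- The coefficients in the expansion of `Φ(z)` in terms of `wtInt`, truncated at degree `D`. -/
def cOff (t z : K) (B D r : ℕ) : K :=
  ∑ d ∈ Finset.range (D + 1), if r ≤ d then
    evT t (PowerSeries.coeff (d - r) (pochh (PowerSeries.X : PowerSeries (Polynomial ℤ))
      (PowerSeries.C Polynomial.X) (B + 1))) * z ^ d else 0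

/-- The value of `Φ` at `z` as a combination of the `wtInt N ν nt r`, with coefficients depending on
`ν` and `ν̃` only through their last entry and the degree bound `D`. -/
lemma eval_PhiPoly (t z : K) (N B D : ℕ) (hN : 1 ≤ N) (ν nt : ℕ → ℕ)
    (hν : ∀ k, 1 ≤ k → k < N → ν k ≤ ν (k + 1)) (hnt : ∀ k, 1 ≤ k → k < N → nt k ≤ nt (k + 1))
    (hνN : ν N = B) (hntN : nt N = B) (hD : (PhiPoly N ν nt).natDegree ≤ D) :
    Polynomial.eval₂ (evT t) z (PhiPoly N ν nt) =
      ∑ r ∈ Finset.range (D + 1), cOff t z B D r * evT t (wtInt N ν nt r) := by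
  rw [Polynomial.eval₂_eq_sum_range' _ (Nat.lt_succ_of_le hD)]
  simp only [cOff, Finset.sum_mul]
  rw [Finset.sum_comm]
  refine Finset.sum_congr rfl fun d hd => ?_
  rw [Finset.mem_range] at hd
  rw [← Polynomial.coeff_coe, PhiPoly_coe N B hN ν nt hν hnt hνN hntN, PowerSeries.coeff_mul,
    Finset.Nat.sum_antidiagonal_eq_sum_range_succ_mk, ← Finset.sum_range_reflect, map_sum,
    Finset.sum_mul]
  refine Finset.sum_subset_zero_on_sdiff (Finset.range_subset_range.2 hd) ?_ ?_
  · intro r hr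
    rw [Finset.mem_sdiff, Finset.mem_range, Finset.mem_range] at hr
    rw [if_neg (by omega), zero_mul]
  · intro r hr
    rw [Finset.mem_range] at hr
    dsimp only
    rw [if_pos (by omega), PowerSeries.coeff_mk, map_mul, show d.succ - 1 - r = d - r by omega,
      show d - (d - r) = r by omega]
    ring

/-- For `ν = 0` only the empty tuple of `λ_j` contributes to `Φ`. -/
lemma PhiPoly_diag (N : ℕ) (hN : 1 ≤ N) (nt : ℕ → ℕ) :
    PhiPoly N (fun _ => 0) nt = Polynomial.C (wtInt N (fun _ => 0) nt 0) := by
  obtain ⟨n, rfl⟩ : ∃ n, N = n + 1 := ⟨N - 1, by omega⟩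
  have hs : ∀ j, sigv (fun _ => 0) j = 0 := fun j => by simp [sigv, nuc]
  have hlam : ∀ (f : Fin (n + 1 - 1) → ℕ), f ∈ Fintype.piFinset (fun j : Fin (n + 1 - 1) =>
      Finset.range (sigv (fun _ => 0) ((j : ℕ) + 1) + 1)) → f = fun _ => 0 := by
    intro f hf
    rw [Fintype.mem_piFinset] at hf
    funext j
    have := hf j
    rw [hs, Finset.mem_range] at this
    omega
  have h0 : ∀ j, lamv (n + 1) (fun _ => 0) j = 0 := fun j => by simp [lamv]
  have h1 : ∀ j, lamsum (n + 1) (fun _ => 0) j = 0 := fun j => Finset.sum_eq_zero fun a _ => h0 a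
  rw [PhiPoly, Finset.sum_eq_single_of_mem (fun _ => 0)
    (by rw [Fintype.mem_piFinset]; intro j; simp) (fun f hf hne => absurd (hlam f hf) hne)]
  simp only [h0, h1, hs, nuc]
  have hI : Finset.Icc 1 (n + 1 - 1) = Finset.Ico (0 + 1) (n + 1) := rfl
  rw [hI, ← Finset.prod_Ico_add' _ 0 n 1, ← Finset.range_eq_Ico, wtInt,
    Finset.prod_range_succ', map_mul, map_prod]
  have g0 : gaussInt (nt 1) 0 = 1 := by
    simpa [gaussNat_zero_right] using gaussInt_natCast (nt 1) 0
  have g1 : gaussInt 0 0 = 1 := by simpa [gaussNat] using gaussInt_natCast 0 0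
  simp [pochh, nuc, g0, g1]

end Expansion

section Laurent

/-- The base ring `ℤ[q][t, t⁻¹]`. -/
abbrev LRing := LaurentPolynomial (Polynomial ℤ)

/-- The field of fractions of the base ring. -/
abbrev LField := FractionRing LRing

/-- The element `t` of the field of fractions. -/
def tK : LField := algebraMap LRing LField (LaurentPolynomial.T 1)

lemma algebraMap_T (k : ℤ) : algebraMap LRing LField (LaurentPolynomial.T k) = tK ^ k := by
  have hnat : ∀ k : ℕ, algebraMap LRing LField (LaurentPolynomial.T k) = tK ^ k := fun k => by
    rw [tK, ← map_pow, LaurentPolynomial.T_pow, mul_one]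
  obtain ⟨k, rfl | rfl⟩ := k.eq_nat_or_neg
  · rw [hnat, zpow_natCast]
  · rw [zpow_neg, zpow_natCast, ← hnat]
    refine eq_inv_of_mul_eq_one_left ?_
    rw [← map_mul, ← LaurentPolynomial.T_add, neg_add_cancel, LaurentPolynomial.T_zero, map_one]

lemma tK_ne_zero : tK ≠ 0 := by
  intro h
  have := algebraMap_T 1
  have h2 := algebraMap_T (-1)
  have h3 : algebraMap LRing LField (LaurentPolynomial.T 1 * LaurentPolynomial.T (-1)) = 1 := by
    rw [← LaurentPolynomial.T_add, add_neg_cancel, LaurentPolynomial.T_zero, map_one]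
  rw [map_mul, this, h] at h3
  simp at h3

lemma tK_pow_ne (d : ℕ) : 1 - tK ^ (d + 1) ≠ 0 := by
  intro h
  rw [sub_eq_zero, ← zpow_natCast, ← algebraMap_T, ← map_one (algebraMap LRing LField)] at h
  have h1 := IsFractionRing.injective LRing LField h
  have h2 := congrArg LaurentPolynomial.degree h1
  rw [LaurentPolynomial.degree_T, ← LaurentPolynomial.T_zero, LaurentPolynomial.degree_T] at h2
  norm_cast at h2

lemma algebraMap_tEmbA (p : Polynomial ℤ) : algebraMap LRing LField (tEmbA p) = evT tK p := by
  have : (algebraMap LRing LField).comp tEmbA = evT tK := by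
    refine Polynomial.ringHom_ext (fun a => by simp) ?_
    rw [evT_X, RingHom.comp_apply, tEmbA, tK]
    simp
  rw [← this, RingHom.comp_apply]

/-- The argument of `Φ` attached to a site. -/
def zK (M : ℕ) (lam : ℕ → ℕ) (i j : ℕ) : LField := algebraMap LRing LField
  (qA ^ (j - i) * LaurentPolynomial.T ((conjP M lam i : ℤ) - conjP M lam j))

/-- The coefficients in the expansion of the factor of the partition sum attached to a site. -/
def cSite (M D : ℕ) (lam : ℕ → ℕ) (i j r : ℕ) : LField :=
  if i = j then if r = 0 then 1 else 0 else
    cOff tK (zK M lam i j) (topV (lam 1) (conjP M lam) (i, j)) D r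

lemma site_expand (M N D : ℕ) (hN : 1 ≤ N) (lam mu : ℕ → ℕ)
    (f : Fin (lam 1 + 1) × Fin (lam 1 + 1) × Fin (N + 1) → ℕ)
    (h : Adm (lam 1) N (conjP M lam) mu f) (i j : ℕ) (hi : 1 ≤ i) (hij : i ≤ j) (hj : j ≤ lam 1)
    (hD : (PhiPoly N (fun k => nuV (lam 1) N f (i + 1) j k)
      (fun k => nuV (lam 1) N f i j k)).natDegree ≤ D) :
    algebraMap LRing LField (Polynomial.eval₂ tEmbA
          (qA ^ (j - i) * LaurentPolynomial.T ((conjP M lam i : ℤ) - conjP M lam j))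
          (PhiPoly N (fun k => nuV (lam 1) N f (i + 1) j k)
            (fun k => nuV (lam 1) N f i j k))) =
      ∑ r ∈ Finset.range (D + 1), cSite M D lam i j r *
        evT tK (wtInt N (fun k => nuV (lam 1) N f (i + 1) j k)
          (fun k => nuV (lam 1) N f i j k) r) := by
  have hcomp : (algebraMap LRing LField).comp tEmbA = evT tK :=
    RingHom.ext fun p => algebraMap_tEmbA p
  rw [Polynomial.hom_eval₂, hcomp, ← zK]
  rcases hij.eq_or_lt with rfl | hlt
  · have h0 : (fun k => nuV (lam 1) N f (i + 1) i k) = fun _ => 0 := by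
      funext k
      exact h.zero _ _ _ (by omega)
    rw [h0, PhiPoly_diag N hN, Polynomial.eval₂_C]
    simp [cSite]
  · have e1 := h.top (i + 1) j
    have e2 : topV (lam 1) (conjP M lam) (i + 1, j) = topV (lam 1) (conjP M lam) (i, j) := by
      rw [topV, topV, if_pos (by dsimp only; omega), if_pos (by dsimp only; omega)]
    have h1 : ∀ k, 1 ≤ k → k < N → nuV (lam 1) N f (i + 1) j k ≤ nuV (lam 1) N f (i + 1) j (k + 1) :=
      fun k _ hk => h.mono (i + 1) j k hk
    have h2 : ∀ k, 1 ≤ k → k < N → nuV (lam 1) N f i j k ≤ nuV (lam 1) N f i j (k + 1) :=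
      fun k _ hk => h.mono i j k hk
    rw [eval_PhiPoly tK (zK M lam i j) N (topV (lam 1) (conjP M lam) (i, j)) D hN
      (fun k => nuV (lam 1) N f (i + 1) j k) (fun k => nuV (lam 1) N f i j k) h1 h2
      (e1.trans e2) (h.top i j) hD]
    simp only [cSite, if_neg hlt.ne]

/-- Extension by zero of a function on a finite set. -/
def extP {ι : Type*} (S : Finset ι) (p : ∀ a ∈ S, ℕ) (a : ι) : ℕ :=
  if h : a ∈ S then p a h else 0

lemma prod_sum_extP {ι R : Type*} [DecidableEq ι] [CommRing R] (S : Finset ι) (T : Finset ℕ) (F : ι → ℕ → R) :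
    ∏ a ∈ S, ∑ r ∈ T, F a r = ∑ p ∈ S.pi (fun _ => T), ∏ a ∈ S, F a (extP S p a) := by
  rw [Finset.prod_sum]
  refine Finset.sum_congr rfl fun p _ => ?_
  rw [← Finset.prod_attach S (fun a => F a (extP S p a))]
  exact Finset.prod_congr rfl fun a _ => by rw [extP, dif_pos a.2]

/-- The partition sum as a combination of matrix elements of products of row operators; `mu` enters
only through the order of the operators. -/
lemma Zsum_expand (M N D : ℕ) (hN : 1 ≤ N) (lam mu : ℕ → ℕ)
    (hD : ∀ f ∈ admSet M N lam mu, ∀ i ∈ Finset.Icc 1 (lam 1), ∀ j ∈ Finset.Icc i (lam 1),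
      (PhiPoly N (fun k => nuV (lam 1) N f (i + 1) j k)
        (fun k => nuV (lam 1) N f i j k)).natDegree ≤ D) :
    algebraMap LRing LField (Zsum13 M N lam mu) =
      ∑ p ∈ ((Finset.Icc 1 (lam 1)).sigma fun i => Finset.Icc i (lam 1)).pi
          (fun _ => Finset.range (D + 1)),
        (∏ a ∈ (Finset.Icc 1 (lam 1)).sigma fun i => Finset.Icc i (lam 1),
          cSite M D lam a.1 a.2 (extP _ p a)) *
        iterT tK (fun i j => (extP _ p ⟨i, j⟩ : ℤ)) (lam 1) (fun k => mu (k + 1)) N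
          (emb (topV (lam 1) (conjP M lam))) := by
  have hconj : ∀ j, conjP M lam j ≤ M := fun j =>
    (Finset.card_filter_le _ _).trans (by simp)
  simp only [← sum_admissible (lam 1) N M (conjP M lam) mu hconj tK tK_ne_zero tK_pow_ne,
    Finset.mul_sum]
  rw [Finset.sum_comm, Zsum13, map_sum]
  refine Finset.sum_congr rfl fun f hf => ?_
  have h : Adm (lam 1) N (conjP M lam) mu f := (Finset.mem_filter.1 hf).2
  rw [map_mul, algebraMap_T, map_prod]
  have hprod : ∀ i ∈ Finset.Icc 1 (lam 1), algebraMap LRing LField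
      (∏ j ∈ Finset.Icc i (lam 1), Polynomial.eval₂ tEmbA
          (qA ^ (j - i) * LaurentPolynomial.T ((conjP M lam i : ℤ) - conjP M lam j))
          (PhiPoly N (fun k => nuV (lam 1) N f (i + 1) j k)
            (fun k => nuV (lam 1) N f i j k))) =
      ∏ j ∈ Finset.Icc i (lam 1), ∑ r ∈ Finset.range (D + 1), cSite M D lam i j r *
        evT tK (wtInt N (fun k => nuV (lam 1) N f (i + 1) j k)
          (fun k => nuV (lam 1) N f i j k) r) := by
    intro i hi
    rw [map_prod]
    refine Finset.prod_congr rfl fun j hj => ?_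
    have hi' := Finset.mem_Icc.1 hi
    have hj' := Finset.mem_Icc.1 hj
    exact site_expand M N D hN lam mu f h i j hi'.1 hj'.1 hj'.2 (hD f hf i hi j hj)
  rw [Finset.prod_congr rfl hprod, Finset.prod_sigma', prod_sum_extP, Finset.mul_sum]
  refine Finset.sum_congr rfl fun p _ => ?_
  rw [Finset.prod_sigma' (Finset.Icc 1 (lam 1)) (fun i => Finset.Icc i (lam 1))
    (fun i j => evT tK (wtInt N (fun k => nuV (lam 1) N f (i + 1) j k)
      (fun k => nuV (lam 1) N f i j k) (extP _ p ⟨i, j⟩))), mul_left_comm,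
    ← Finset.prod_mul_distrib]

end Laurent

theorem statement13 (M N : ℕ) (hN : 1 ≤ N) (lam mu tmu : ℕ → ℕ)
    (hdec : ∀ i, 1 ≤ i → lam (i + 1) ≤ lam i) (hfin : ∀ i, M < i → lam i = 0)
    (hmu : ∑ k ∈ Finset.Icc 1 N, mu k = ∑ i ∈ Finset.Icc 1 M, lam i)
    (htmu : ∑ k ∈ Finset.Icc 1 N, tmu k = ∑ i ∈ Finset.Icc 1 M, lam i)
    (hperm : ∃ e : Equiv.Perm (Fin N), ∀ k : Fin N, tmu ((k : ℕ) + 1) = mu ((e k : ℕ) + 1)) :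
    Zsum13 M N lam mu = Zsum13 M N lam tmu := by
  -- a degree bound valid for all families, whatever the composition
  obtain ⟨D, hD⟩ : ∃ D, ∀ f ∈ (Fintype.piFinset fun _ : Fin (lam 1 + 1) × Fin (lam 1 + 1) ×
      Fin (N + 1) => Finset.range (M + 1)), ∀ i ∈ Finset.Icc 1 (lam 1),
      ∀ j ∈ Finset.Icc i (lam 1), (PhiPoly N (fun k => nuV (lam 1) N f (i + 1) j k)
        (fun k => nuV (lam 1) N f i j k)).natDegree ≤ D := by
    refine ⟨∑ f ∈ (Fintype.piFinset fun _ : Fin (lam 1 + 1) × Fin (lam 1 + 1) ×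
      Fin (N + 1) => Finset.range (M + 1)), ∑ i ∈ Finset.Icc 1 (lam 1),
      ∑ j ∈ Finset.Icc i (lam 1), (PhiPoly N (fun k => nuV (lam 1) N f (i + 1) j k)
        (fun k => nuV (lam 1) N f i j k)).natDegree, fun f hf i hi j hj => ?_⟩
    refine le_trans ?_ (Finset.single_le_sum (f := fun f => ∑ i ∈ Finset.Icc 1 (lam 1),
      ∑ j ∈ Finset.Icc i (lam 1), (PhiPoly N (fun k => nuV (lam 1) N f (i + 1) j k)
        (fun k => nuV (lam 1) N f i j k)).natDegree) (fun _ _ => Nat.zero_le _) hf)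
    refine le_trans ?_ (Finset.single_le_sum (f := fun i =>
      ∑ j ∈ Finset.Icc i (lam 1), (PhiPoly N (fun k => nuV (lam 1) N f (i + 1) j k)
        (fun k => nuV (lam 1) N f i j k)).natDegree) (fun _ _ => Nat.zero_le _) hi)
    exact Finset.single_le_sum (f := fun j => (PhiPoly N (fun k => nuV (lam 1) N f (i + 1) j k)
        (fun k => nuV (lam 1) N f i j k)).natDegree) (fun _ _ => Nat.zero_le _) hj
  refine IsFractionRing.injective LRing LField ?_
  rw [Zsum_expand M N D hN lam mu fun f hf => hD f (Finset.mem_filter.1 hf).1,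
    Zsum_expand M N D hN lam tmu fun f hf => hD f (Finset.mem_filter.1 hf).1]
  refine Finset.sum_congr rfl fun p _ => ?_
  rw [iterT_perm tK tK_ne_zero tK_pow_ne _ _ (fun k => mu (k + 1)) (fun k => tmu (k + 1)) N hperm]
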